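/- arXiv:2401.16941 — 6 statements merged into one kernel-verified Lean document; each statement's English description precedes it below -/
import Mathlib

section
/- Let L be a field of characteristic 0 and let δ_i : L → L (i ∈ ℤ_{≤0}) be additive maps. Then the following are equivalent: (1) there exists a (necessarily unique) deformed Laurent series product · on L((T^{-1})) such that T·a = aT + Σ_{i≤0} δ_i(a)T^i for all a ∈ L; (2) the δ_i satisfy the Leibniz-type identity (★). Moreover, when these hold, the product is given on monomials by a T^i · b T^j = ab T^{i+j} + Σ_{k≥1} Σ_{(j_1,…,j_k)∈(ℤ_{≤0})^k} binom(i,k) a·δ_{j_1}⋯δ_{j_k}(b) T^{j_1+⋯+j_k−k+i+j}, extended to all of L((T^{-1})) by additivity and continuity. -/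
noncomputable section

open scoped Classical

/-- The generalized binomial coefficient `binom n k` for an integer `n` and natural `k`;
it equals `n (n-1) ⋯ (n-k+1) / k!` (an integer). -/
def zbinom (n : ℤ) (k : ℕ) : ℤ :=
  if 0 ≤ n then (n.toNat.choose k : ℤ) else (-1) ^ k * (((k : ℤ) - 1 - n).toNat.choose k : ℤ)

/-- The generalized binomial coefficient `a (a-1) ⋯ (a-k+1) / k!` in a field `K`
(of characteristic zero in all uses). -/
def gbinom {K : Type*} [Field K] (a : K) (k : ℕ) : K :=
  (∏ i ∈ Finset.range k, (a - (i : K))) / (k.factorial : K)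

/-- Inverse Laurent series over `L`: formal sums `Σ_{i ∈ ℤ} a_i T^i` whose support is
bounded above. -/
structure InvLaurent (L : Type*) [Zero L] where
  coeff : ℤ → L
  bdd' : ∃ N : ℤ, ∀ i : ℤ, N < i → coeff i = 0

namespace InvLaurent

variable {L : Type*} [Field L]

@[ext] theorem ext {f g : InvLaurent L} (h : ∀ i, f.coeff i = g.coeff i) : f = g := by
  cases f; cases g
  simp only [mk.injEq]
  funext i; exact h i

instance : Zero (InvLaurent L) := ⟨⟨fun _ => 0, ⟨0, fun _ _ => rfl⟩⟩⟩

instance : Add (InvLaurent L) :=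
  ⟨fun f g => ⟨fun i => f.coeff i + g.coeff i, by
    obtain ⟨N, hN⟩ := f.bdd'; obtain ⟨M, hM⟩ := g.bdd'
    exact ⟨max N M, fun i hi => by
      show f.coeff i + g.coeff i = 0
      rw [hN i (lt_of_le_of_lt (le_max_left _ _) hi),
        hM i (lt_of_le_of_lt (le_max_right _ _) hi), add_zero]⟩⟩⟩

instance : Neg (InvLaurent L) :=
  ⟨fun f => ⟨fun i => -f.coeff i, by
    obtain ⟨N, hN⟩ := f.bdd'
    exact ⟨N, fun i hi => by show -f.coeff i = 0; rw [hN i hi, neg_zero]⟩⟩⟩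

@[simp] lemma coeff_zero (i : ℤ) : (0 : InvLaurent L).coeff i = 0 := rfl
@[simp] lemma coeff_add (f g : InvLaurent L) (i : ℤ) :
    (f + g).coeff i = f.coeff i + g.coeff i := rfl
@[simp] lemma coeff_neg (f : InvLaurent L) (i : ℤ) : (-f).coeff i = -f.coeff i := rfl

instance : AddCommGroup (InvLaurent L) where
  add_assoc f g h := by ext i; simp [add_assoc]
  zero_add f := by ext i; simp
  add_zero f := by ext i; simp
  neg_add_cancel f := by ext i; simp
  add_comm f g := by ext i; simp [add_comm]
  nsmul := nsmulRec
  zsmul := zsmulRec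

@[simp] lemma coeff_sub (f g : InvLaurent L) (i : ℤ) :
    (f - g).coeff i = f.coeff i - g.coeff i := by
  rw [sub_eq_add_neg, coeff_add, coeff_neg, sub_eq_add_neg]

/-- The series `a T^n`. -/
def single (n : ℤ) (a : L) : InvLaurent L :=
  ⟨fun i => if i = n then a else 0, ⟨n, fun i hi => if_neg (by omega)⟩⟩

/-- The series `T^n`. -/
def T (L : Type*) [Field L] (n : ℤ) : InvLaurent L := single n 1

/-- Coefficientwise multiplication by a scalar `b ∈ L` on the left. -/
def lsmul (b : L) (f : InvLaurent L) : InvLaurent L :=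
  ⟨fun i => b * f.coeff i, by
    obtain ⟨N, hN⟩ := f.bdd'
    exact ⟨N, fun i hi => by show b * f.coeff i = 0; rw [hN i hi, mul_zero]⟩⟩

/-- The standard degree map, with values in `ℤ ∪ {-∞}`. -/
def deg (f : InvLaurent L) : WithBot ℤ :=
  if f = 0 then ⊥ else ↑(sSup {i : ℤ | f.coeff i ≠ 0})

lemma deg_eq_bot_iff (f : InvLaurent L) : deg f = ⊥ ↔ f = 0 := by
  unfold deg
  split
  · simpa
  · simp_all

lemma support_nonempty {f : InvLaurent L} (hf : f ≠ 0) :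
    {i : ℤ | f.coeff i ≠ 0}.Nonempty := by
  by_contra h
  rw [Set.not_nonempty_iff_eq_empty] at h
  apply hf
  ext i
  have : i ∉ ({i : ℤ | f.coeff i ≠ 0}) := by rw [h]; exact Set.notMem_empty i
  simpa using this

lemma support_bddAbove (f : InvLaurent L) : BddAbove {i : ℤ | f.coeff i ≠ 0} := by
  obtain ⟨N, hN⟩ := f.bdd'
  exact ⟨N, fun i hi => by by_contra h; exact hi (hN i (by omega))⟩

lemma le_deg {f : InvLaurent L} {i : ℤ} (h : f.coeff i ≠ 0) : (i : WithBot ℤ) ≤ deg f := by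
  have hf : f ≠ 0 := by
    intro h0; rw [h0] at h; exact h rfl
  rw [deg, if_neg hf]
  exact_mod_cast le_csSup (support_bddAbove f) h

lemma deg_neg (f : InvLaurent L) : deg (-f) = deg f := by
  unfold deg
  have h0 : -f = 0 ↔ f = 0 := by
    constructor
    · intro h; ext i
      have := congrArg (fun g => InvLaurent.coeff g i) h
      simp only [coeff_neg, coeff_zero, neg_eq_zero] at this
      simpa using this
    · intro h; rw [h]; ext i; simp
  have hs : {i : ℤ | (-f).coeff i ≠ 0} = {i : ℤ | f.coeff i ≠ 0} := by
    ext i; simp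
  rw [hs]
  by_cases h : f = 0
  · rw [if_pos (h0.mpr h), if_pos h]
  · rw [if_neg (fun hh => h (h0.mp hh)), if_neg h]

lemma deg_add_le (f g : InvLaurent L) : deg (f + g) ≤ max (deg f) (deg g) := by
  by_cases h : f + g = 0
  · rw [(deg_eq_bot_iff _).mpr h]; exact bot_le
  · rw [deg, if_neg h]
    have hne := support_nonempty h
    have : sSup {i : ℤ | (f + g).coeff i ≠ 0} ∈ {i : ℤ | (f + g).coeff i ≠ 0} := by
      obtain ⟨N, hN⟩ := support_bddAbove (f + g)
      obtain ⟨m, hm, hmax⟩ := Int.exists_greatest_of_bdd ⟨N, fun i hi => hN hi⟩ hne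
      have : sSup {i : ℤ | (f + g).coeff i ≠ 0} = m :=
        le_antisymm (csSup_le hne hmax) (le_csSup (support_bddAbove _) hm)
      rw [this]; exact hm
    set m := sSup {i : ℤ | (f + g).coeff i ≠ 0} with hm
    have hc : (f + g).coeff m ≠ 0 := this
    rw [coeff_add] at hc
    rcases (by by_contra hh; push_neg at hh; rw [hh.1, hh.2, add_zero] at hc; exact hc rfl :
        f.coeff m ≠ 0 ∨ g.coeff m ≠ 0) with hf | hg
    · exact le_trans (le_deg hf) (le_max_left _ _)
    · exact le_trans (le_deg hg) (le_max_right _ _)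

/-- real-exponential of a degree value: `e^d`, with `e^{-∞} = 0`. -/
def edeg : WithBot ℤ → ℝ
  | ⊥ => 0
  | (n : ℤ) => Real.exp n

lemma edeg_nonneg (d : WithBot ℤ) : 0 ≤ edeg d := by
  cases d with
  | bot => exact le_refl 0
  | coe n => exact le_of_lt (Real.exp_pos _)

lemma edeg_mono {d d' : WithBot ℤ} (h : d ≤ d') : edeg d ≤ edeg d' := by
  cases d with
  | bot => exact edeg_nonneg d'
  | coe n =>
    cases d' with
    | bot => exact absurd h (by simp)
    | coe m =>
      have : n ≤ m := by exact_mod_cast h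
      exact Real.exp_le_exp.mpr (by exact_mod_cast this)

lemma edeg_eq_zero_iff (d : WithBot ℤ) : edeg d = 0 ↔ d = ⊥ := by
  cases d with
  | bot => simp [edeg]
  | coe n =>
    simp only [edeg]
    constructor
    · intro h; exact absurd h (ne_of_gt (Real.exp_pos _))
    · intro h; exact absurd h (by simp)

noncomputable instance : MetricSpace (InvLaurent L) where
  dist f g := edeg (deg (f - g))
  dist_self f := by
    show edeg (deg (f - f)) = 0
    rw [sub_self, (deg_eq_bot_iff (0 : InvLaurent L)).mpr rfl]
    rfl
  dist_comm f g := by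
    show edeg (deg (f - g)) = edeg (deg (g - f))
    have h : g - f = -(f - g) := by abel
    rw [h, deg_neg]
  dist_triangle f g h := by
    show edeg (deg (f - h)) ≤ edeg (deg (f - g)) + edeg (deg (g - h))
    have h1 : f - h = (f - g) + (g - h) := by abel
    have h2 : deg (f - h) ≤ max (deg (f - g)) (deg (g - h)) := by
      rw [h1]; exact deg_add_le _ _
    calc edeg (deg (f - h)) ≤ edeg (max (deg (f - g)) (deg (g - h))) := edeg_mono h2
      _ ≤ edeg (deg (f - g)) + edeg (deg (g - h)) := by
          rcases max_cases (deg (f - g)) (deg (g - h)) with ⟨hm, _⟩ | ⟨hm, _⟩ <;> rw [hm]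
          · exact le_add_of_nonneg_right (edeg_nonneg _)
          · exact le_add_of_nonneg_left (edeg_nonneg _)
  eq_of_dist_eq_zero := by
    intro f g hd
    have hd' : edeg (deg (f - g)) = 0 := hd
    have : deg (f - g) = ⊥ := (edeg_eq_zero_iff _).mp hd'
    have := (deg_eq_bot_iff _).mp this
    exact sub_eq_zero.mp this

end InvLaurent

open InvLaurent

/-- A deformed Laurent series product on `L((T⁻¹))`:
an associative, distributive, jointly continuous multiplication which restricts to left
scalar multiplication by `L`, satisfies `T^i · T^j = T^{i+j}`, and is compatible with the
standard degree map. -/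
structure DeformedProduct (L : Type*) [Field L] where
  mul : InvLaurent L → InvLaurent L → InvLaurent L
  mul_assoc : ∀ f g h, mul (mul f g) h = mul f (mul g h)
  left_distrib : ∀ f g h, mul f (g + h) = mul f g + mul f h
  right_distrib : ∀ f g h, mul (f + g) h = mul f h + mul g h
  continuous_mul : Continuous fun p : InvLaurent L × InvLaurent L => mul p.1 p.2
  lsmul_eq : ∀ (b : L) (f : InvLaurent L), mul (single 0 b) f = lsmul b f
  T_mul_T : ∀ i j : ℤ, mul (T L i) (T L j) = T L (i + j)
  deg_mul : ∀ f g, deg (mul f g) = deg f + deg g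

/-- `HasDelta μ δ` says that `T · a = a T + Σ_{i ≤ 0} δ_i(a) T^i` for all `a ∈ L`. -/
def HasDelta {L : Type*} [Field L] (μ : DeformedProduct L) (δ : ℤ → L → L) : Prop :=
  ∀ (a : L) (i : ℤ), (μ.mul (T L 1) (single 0 a)).coeff i =
    if i = 1 then a else if i ≤ 0 then δ i a else 0

/-- Composition `δ_{j₁} ∘ ⋯ ∘ δ_{j_k}` along a list `[j₁, …, j_k]`. -/
def dcomp {L : Type*} [Field L] (δ : ℤ → L → L) : List ℤ → L → L
  | [], a => a
  | j :: js, a => δ j (dcomp δ js a)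

/-- The Leibniz-type identity (★) for the family `δ_i`, `i ≤ 0`. -/
def LeibnizStar {L : Type*} [Field L] (δ : ℤ → L → L) : Prop :=
  ∀ i : ℤ, i ≤ 0 → ∀ a b : L,
    δ i (a * b) = a * δ i b + δ i a * b +
      ∑ᶠ p : ℤ × List ℤ,
        if p.1 ≤ 0 ∧ p.2 ≠ [] ∧ (∀ j ∈ p.2, j ≤ 0) ∧
            p.2.sum - (p.2.length : ℤ) + p.1 = i
        then zbinom p.1 p.2.length • (δ p.1 a * dcomp δ p.2 b) else 0

end


noncomputable section

namespace InvLaurent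

section Aux

variable {L : Type*} [Field L]

/-- `f` has no terms of degree above `n`. -/
def Bd (f : InvLaurent L) (n : ℤ) : Prop := ∀ i, n < i → f.coeff i = 0

lemma exists_Bd (f : InvLaurent L) : ∃ n, Bd f n := f.bdd'

lemma Bd.mono {f : InvLaurent L} {n m : ℤ} (h : Bd f n) (hnm : n ≤ m) : Bd f m :=
  fun i hi => h i (by omega)

lemma Bd.add {f g : InvLaurent L} {n : ℤ} (hf : Bd f n) (hg : Bd g n) : Bd (f + g) n :=
  fun i hi => by rw [coeff_add, hf i hi, hg i hi, add_zero]

lemma Bd.sub {f g : InvLaurent L} {n : ℤ} (hf : Bd f n) (hg : Bd g n) : Bd (f - g) n :=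
  fun i hi => by rw [coeff_sub, hf i hi, hg i hi, sub_zero]

lemma coeff_single (n : ℤ) (a : L) (i : ℤ) : (single n a).coeff i = if i = n then a else 0 := rfl

lemma coeff_lsmul (b : L) (f : InvLaurent L) (i : ℤ) : (lsmul b f).coeff i = b * f.coeff i := rfl

lemma Bd_single (n : ℤ) (a : L) : Bd (single n a) n :=
  fun i hi => by rw [coeff_single, if_neg (by omega)]

lemma Bd.lsmul {f : InvLaurent L} {n : ℤ} (hf : Bd f n) (b : L) : Bd (lsmul b f) n :=
  fun i hi => by rw [coeff_lsmul, hf i hi, mul_zero]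

lemma exists_Bd₂ (f g : InvLaurent L) : ∃ n, Bd f n ∧ Bd g n := by
  obtain ⟨n, hn⟩ := exists_Bd f
  obtain ⟨m, hm⟩ := exists_Bd g
  exact ⟨max n m, hn.mono (le_max_left _ _), hm.mono (le_max_right _ _)⟩

/-- coefficient as an additive map -/
def coeffHom (i : ℤ) : InvLaurent L →+ L where
  toFun f := f.coeff i
  map_zero' := rfl
  map_add' _ _ := rfl

lemma coeffHom_apply (i : ℤ) (f : InvLaurent L) : coeffHom i f = f.coeff i := rfl

/-- An additive map shifting the filtration by at most `s`. -/
def Filt (F : InvLaurent L →+ InvLaurent L) (s : ℤ) : Prop :=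
  ∀ f n, Bd f n → Bd (F f) (n + s)

lemma Filt.comp {F G : InvLaurent L →+ InvLaurent L} {s t : ℤ} (hF : Filt F s) (hG : Filt G t) :
    Filt (F.comp G) (t + s) := fun f n hf => by
  have := hF _ _ (hG _ _ hf)
  rw [add_assoc] at this
  exact this

lemma Filt.ext {F G : InvLaurent L →+ InvLaurent L} {s t : ℤ} (hF : Filt F s) (hG : Filt G t)
    (h : ∀ i a, F (single i a) = G (single i a)) (f : InvLaurent L) : F f = G f := by
  obtain ⟨n, hn⟩ := exists_Bd f
  have key : ∀ k : ℕ, ∃ r, Bd r (n - k) ∧ F f - G f = F r - G r := by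
    intro k
    induction k with
    | zero => exact ⟨f, by simpa using hn, rfl⟩
    | succ k ih =>
      obtain ⟨r, hr, he⟩ := ih
      refine ⟨r - single (n - k) (r.coeff (n - k)), ?_, ?_⟩
      · intro i hi
        rw [coeff_sub, coeff_single]
        split_ifs with h1
        · rw [h1, sub_self]
        · rw [hr i (by push_cast at hi; omega), sub_zero]
      · rw [he, map_sub, map_sub, h]; abel
  ext m
  obtain ⟨r, hr, he⟩ := key (n + max s t - m + 1).toNat
  have h1 := hF _ _ hr m (by omega)
  have h2 := hG _ _ hr m (by omega)
  have := congrArg (fun x => x.coeff m) he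
  simp only [coeff_sub, h1, h2, sub_zero] at this
  exact sub_eq_zero.mp this

/-- right multiplication by `T^j` -/
def shift (j : ℤ) : InvLaurent L →+ InvLaurent L where
  toFun f := ⟨fun m => f.coeff (m - j), by
    obtain ⟨n, hn⟩ := exists_Bd f
    exact ⟨n + j, fun i hi => hn _ (by omega)⟩⟩
  map_zero' := by ext; rfl
  map_add' f g := by ext; rfl

lemma coeff_shift (j : ℤ) (f : InvLaurent L) (m : ℤ) : (shift j f).coeff m = f.coeff (m - j) := rfl

lemma Filt_shift (j : ℤ) : Filt (shift j : InvLaurent L →+ InvLaurent L) j :=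
  fun _ _ hf i hi => by rw [coeff_shift]; exact hf _ (by omega)

lemma shift_shift (i j : ℤ) (f : InvLaurent L) : shift i (shift j f) = shift (i + j) f := by
  ext m; simp only [coeff_shift]; congr 1; omega

lemma shift_zero (f : InvLaurent L) : shift 0 f = f := by
  ext m; simp only [coeff_shift, sub_zero]

lemma shift_single (i j : ℤ) (a : L) : shift i (single j a) = single (j + i) a := by
  ext m; simp only [coeff_shift, coeff_single]; congr 1; apply propext; omega

/-- scalar multiplication as additive map -/
def lsmulHom (b : L) : InvLaurent L →+ InvLaurent L where
  toFun := lsmul b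
  map_zero' := by ext; simp [coeff_lsmul]
  map_add' f g := by ext; simp [coeff_lsmul, mul_add]

lemma lsmulHom_apply (b : L) (f : InvLaurent L) : lsmulHom b f = lsmul b f := rfl

lemma Filt_lsmulHom (b : L) : Filt (lsmulHom b) 0 :=
  fun _ n hf => by rw [add_zero]; exact hf.lsmul b

/-! ### The operator `Δ` -/

section Delta

variable (d : ℤ → L →+ L)

lemma Delta_support {f : InvLaurent L} {n : ℤ} (hf : Bd f n) (hd : ∀ j, 0 < j → d j = 0) (m : ℤ) :
    (Function.support fun i => d (m + 1 - i) (f.coeff i)) ⊆ (Finset.Icc (m + 1) n : Finset ℤ) := by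
  intro i hi
  rw [Finset.coe_Icc, Set.mem_Icc]
  by_contra hc
  apply hi
  show d (m + 1 - i) (f.coeff i) = 0
  by_cases h : i < m + 1
  · rw [hd _ (by omega)]; rfl
  · rw [hf i (by omega), map_zero]

variable (hd : ∀ j, 0 < j → d j = 0)

/-- The operator `Δ (Σ a_i T^i) = Σ δ_j(a_i) T^{i+j-1}`. -/
def Delta : AddMonoid.End (InvLaurent L) where
  toFun f := ⟨fun m => ∑ᶠ i, d (m + 1 - i) (f.coeff i), by
    obtain ⟨n, hn⟩ := exists_Bd f
    refine ⟨n - 1, fun m hm => ?_⟩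
    rw [finsum_eq_sum_of_support_subset _ (Delta_support d hn hd m), Finset.Icc_eq_empty (by omega),
      Finset.sum_empty]⟩
  map_zero' := by ext m; simp
  map_add' f g := by
    ext m
    obtain ⟨n, hf, hg⟩ := exists_Bd₂ f g
    simp only [coeff_add, map_add]
    exact finsum_add_distrib ((Finset.finite_toSet _).subset (Delta_support d hf hd m))
      ((Finset.finite_toSet _).subset (Delta_support d hg hd m))

lemma coeff_Delta (f : InvLaurent L) (m : ℤ) :
    (Delta d hd f).coeff m = ∑ᶠ i, d (m + 1 - i) (f.coeff i) := rfl

lemma Bd_Delta {f : InvLaurent L} {n : ℤ} (hf : Bd f n) : Bd (Delta d hd f) (n + -1) := by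
  intro m hm
  rw [coeff_Delta, finsum_eq_sum_of_support_subset _ (Delta_support d hf hd m),
    Finset.Icc_eq_empty (by omega), Finset.sum_empty]

lemma Filt_Delta : Filt (Delta d hd) (-1) := fun _ _ hf => Bd_Delta d hd hf

lemma coeff_Delta_single (i : ℤ) (a : L) (m : ℤ) :
    (Delta d hd (single i a)).coeff m = d (m + 1 - i) a := by
  rw [coeff_Delta, finsum_eq_single _ i]
  · rw [coeff_single, if_pos rfl]
  · intro j hj; rw [coeff_single, if_neg hj, map_zero]

lemma Delta_shift (j : ℤ) (f : InvLaurent L) : Delta d hd (shift j f) = shift j (Delta d hd f) := by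
  refine Filt.ext (F := (Delta d hd).comp (shift j)) (G := (shift j).comp (Delta d hd))
    ((Filt_Delta d hd).comp (Filt_shift j)) ((Filt_shift j).comp (Filt_Delta d hd)) ?_ f
  intro i a
  ext m
  show (Delta d hd (shift j (single i a))).coeff m = (shift j (Delta d hd (single i a))).coeff m
  rw [shift_single, coeff_shift, coeff_Delta_single, coeff_Delta_single]
  congr 2; omega

lemma Delta_pow_succ (k : ℕ) (f : InvLaurent L) :
    (Delta d hd ^ (k + 1)) f = Delta d hd ((Delta d hd ^ k) f) := by
  rw [pow_succ']; rfl

lemma Delta_pow_zero (f : InvLaurent L) : (Delta d hd ^ 0) f = f := rfl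

lemma Bd_Delta_pow {f : InvLaurent L} {n : ℤ} (hf : Bd f n) (k : ℕ) :
    Bd ((Delta d hd ^ k) f) (n - k) := by
  induction k with
  | zero => rw [Delta_pow_zero]; simpa using hf
  | succ k ih =>
    rw [Delta_pow_succ]
    exact (Filt_Delta d hd _ _ ih).mono (by push_cast; omega)

lemma Delta_pow_shift (k : ℕ) (j : ℤ) (f : InvLaurent L) :
    (Delta d hd ^ k) (shift j f) = shift j ((Delta d hd ^ k) f) := by
  induction k with
  | zero => rfl
  | succ k ih => rw [Delta_pow_succ, Delta_pow_succ, ih, Delta_shift]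

/-! ### `E i = (1 + Δ)^i` -/

lemma zbinom_eq (n : ℤ) (k : ℕ) : zbinom n k = Ring.choose n k := by
  unfold zbinom
  split_ifs with h
  · obtain ⟨m, rfl⟩ := Int.eq_ofNat_of_zero_le h
    simp [Ring.choose_natCast]
  · obtain ⟨m, rfl⟩ : ∃ m : ℕ, n = -(m : ℤ) := ⟨n.natAbs, by omega⟩
    rw [Ring.choose_neg, Int.negOnePow_def, Units.smul_def]
    have : ((k : ℤ) - 1 - -(m : ℤ)).toNat = m + k - 1 := by omega
    rw [this]
    have h2 : ((m : ℤ) + k - 1) = ((m + k - 1 : ℕ) : ℤ) := by omega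
    rw [h2, Ring.choose_natCast]
    simp

lemma zbinom_zero_right (n : ℤ) : zbinom n 0 = 1 := by
  rw [zbinom_eq, Ring.choose_zero_right]

lemma zbinom_succ_succ (n : ℤ) (k : ℕ) :
    zbinom (n + 1) (k + 1) = zbinom n k + zbinom n (k + 1) := by
  simp only [zbinom_eq]; exact Ring.choose_succ_succ n k

lemma zbinom_zero_succ (k : ℕ) : zbinom 0 (k + 1) = 0 := by
  simp [zbinom]

lemma E_support {f : InvLaurent L} {n m : ℤ} (hf : Bd f n) (i : ℤ) {K : ℕ} (hK : n - m < K) :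
    (Function.support fun k : ℕ => zbinom i k • ((Delta d hd ^ k) f).coeff m) ⊆
      (Finset.range K : Finset ℕ) := by
  intro k hk
  rw [Finset.coe_range, Set.mem_Iio]
  by_contra hc
  apply hk
  show zbinom i k • ((Delta d hd ^ k) f).coeff m = 0
  rw [Bd_Delta_pow d hd hf k m (by omega), smul_zero]

/-- The operator `(1 + Δ)^i = Σ binom(i,k) Δ^k`. -/
def E (i : ℤ) : InvLaurent L →+ InvLaurent L where
  toFun f := ⟨fun m => ∑ᶠ k : ℕ, zbinom i k • ((Delta d hd ^ k) f).coeff m, by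
    obtain ⟨n, hn⟩ := exists_Bd f
    refine ⟨n, fun m hm => ?_⟩
    rw [finsum_eq_sum_of_support_subset _ (E_support d hd hn i (K := 0) (by push_cast; omega)),
      Finset.sum_range_zero]⟩
  map_zero' := by ext m; simp
  map_add' f g := by
    ext m
    obtain ⟨n, hf, hg⟩ := exists_Bd₂ f g
    have hK : n - m < ((n - m + 1).toNat : ℕ) := by omega
    simp only [coeff_add, map_add, smul_add]
    exact finsum_add_distrib ((Finset.finite_toSet _).subset (E_support d hd hf i hK))
      ((Finset.finite_toSet _).subset (E_support d hd hg i hK))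

lemma coeff_E (i : ℤ) (f : InvLaurent L) (m : ℤ) :
    (E d hd i f).coeff m = ∑ᶠ k : ℕ, zbinom i k • ((Delta d hd ^ k) f).coeff m := rfl

lemma coeff_E' {f : InvLaurent L} {n m : ℤ} (hf : Bd f n) (i : ℤ) {K : ℕ} (hK : n - m < K) :
    (E d hd i f).coeff m = ∑ k ∈ Finset.range K, zbinom i k • ((Delta d hd ^ k) f).coeff m := by
  rw [coeff_E, finsum_eq_sum_of_support_subset _ (E_support d hd hf i hK)]

lemma Filt_E (i : ℤ) : Filt (E d hd i) 0 := by
  intro f n hf m hm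
  rw [coeff_E' d hd hf i (K := 0) (by push_cast; omega), Finset.sum_range_zero]

lemma E_lead {f : InvLaurent L} {n : ℤ} (hf : Bd f n) (i : ℤ) :
    (E d hd i f).coeff n = f.coeff n := by
  rw [coeff_E' d hd hf i (K := 1) (by push_cast; omega), Finset.sum_range_one, zbinom_zero_right,
    one_smul, Delta_pow_zero]

lemma E_zero (f : InvLaurent L) : E d hd 0 f = f := by
  ext m
  rw [coeff_E, finsum_eq_single _ 0]
  · rw [zbinom_zero_right, one_smul, Delta_pow_zero]
  · intro k hk
    obtain ⟨k, rfl⟩ := Nat.exists_eq_succ_of_ne_zero hk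
    rw [Nat.succ_eq_add_one, zbinom_zero_succ, zero_smul]

lemma E_succ (i : ℤ) (f : InvLaurent L) :
    E d hd (i + 1) f = E d hd i f + Delta d hd (E d hd i f) := by
  ext m
  obtain ⟨n, hf⟩ := exists_Bd f
  obtain ⟨K, hK⟩ : ∃ K : ℕ, n - m < K := ⟨(n - m + 1).toNat, by omega⟩
  set p : InvLaurent L := ∑ k ∈ Finset.range K, zbinom i k • (Delta d hd ^ k) f with hp
  have hr : Bd (E d hd i f - p) (n - K) := by
    intro j hj
    rw [coeff_sub, coeff_E' d hd hf i (K := K) (by omega), ← coeffHom_apply j p, hp, map_sum]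
    simp only [map_zsmul, coeffHom_apply, sub_self]
  have h1 : (Delta d hd (E d hd i f)).coeff m = (Delta d hd p).coeff m := by
    have := Bd_Delta d hd hr m (by omega)
    rw [map_sub, coeff_sub] at this
    exact sub_eq_zero.mp this
  have h2 : (Delta d hd p).coeff m =
      ∑ k ∈ Finset.range K, zbinom i k • ((Delta d hd ^ (k + 1)) f).coeff m := by
    rw [← coeffHom_apply m, hp, map_sum, map_sum]
    simp only [map_zsmul, coeffHom_apply, Delta_pow_succ]
  rw [coeff_add, h1, h2, coeff_E' d hd hf (i + 1) (K := K + 1) (by push_cast; omega),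
    coeff_E' d hd hf i (K := K + 1) (by push_cast; omega), Finset.sum_range_succ',
    Finset.sum_range_succ']
  simp only [zbinom_succ_succ, add_smul, Finset.sum_add_distrib, zbinom_zero_right]
  abel

lemma E_shift (i j : ℤ) (f : InvLaurent L) : E d hd i (shift j f) = shift j (E d hd i f) := by
  ext m
  rw [coeff_shift, coeff_E, coeff_E]
  simp only [Delta_pow_shift, coeff_shift]

/-! ### `lam i`: left multiplication by `T^i` -/

/-- left multiplication by `T^i` -/
def lam (i : ℤ) : InvLaurent L →+ InvLaurent L := (shift i).comp (E d hd i)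

lemma lam_apply (i : ℤ) (f : InvLaurent L) : lam d hd i f = shift i (E d hd i f) := rfl

lemma Filt_lam (i : ℤ) : Filt (lam d hd i) i := fun f n hf => by
  have := ((Filt_shift i).comp (Filt_E d hd i)) f n hf
  rw [zero_add] at this
  exact this

lemma lam_lead {f : InvLaurent L} {n : ℤ} (hf : Bd f n) (i : ℤ) :
    (lam d hd i f).coeff (i + n) = f.coeff n := by
  rw [lam_apply, coeff_shift, ← E_lead d hd hf i]; congr 1; omega

lemma lam_zero (f : InvLaurent L) : lam d hd 0 f = f := by
  rw [lam_apply, E_zero, shift_zero]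

lemma lam_shift (i j : ℤ) (f : InvLaurent L) :
    lam d hd i (shift j f) = shift j (lam d hd i f) := by
  rw [lam_apply, lam_apply, E_shift, shift_shift, shift_shift, add_comm]

lemma lam_one (f : InvLaurent L) : lam d hd 1 f = shift 1 (f + Delta d hd f) := by
  have := E_succ d hd 0 f
  rw [zero_add, E_zero] at this
  rw [lam_apply, this]

lemma lam_succ (i : ℤ) (f : InvLaurent L) : lam d hd (i + 1) f = lam d hd 1 (lam d hd i f) := by
  rw [lam_one, lam_apply, lam_apply, E_succ, Delta_shift, ← map_add, shift_shift, add_comm 1 i]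

lemma lam_injective (i : ℤ) : Function.Injective (lam d hd i) := by
  rw [injective_iff_map_eq_zero]
  intro f hf
  obtain ⟨n, hn⟩ := exists_Bd f
  have key : ∀ k : ℕ, Bd f (n - k) := by
    intro k
    induction k with
    | zero => simpa using hn
    | succ k ih =>
      intro j hj
      by_cases h : j = n - k
      · subst h
        rw [← lam_lead d hd ih i, hf, coeff_zero]
      · exact ih j (by push_cast at hj; omega)
  ext m
  rw [coeff_zero]
  exact key (n - m + 1).toNat m (by omega)

/-- An integer-indexed family of maps satisfying the recursion of `lam`. -/
lemma lam_unique {X : Type*} (u v : ℤ → X → InvLaurent L) (h0 : ∀ x, u 0 x = v 0 x)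
    (hu : ∀ i x, u (i + 1) x = lam d hd 1 (u i x)) (hv : ∀ i x, v (i + 1) x = lam d hd 1 (v i x))
    (i : ℤ) (x : X) : u i x = v i x := by
  induction i using Int.induction_on with
  | zero => exact h0 x
  | succ i ih => rw [hu, hv, ih]
  | pred i ih =>
    apply lam_injective d hd 1
    rw [← hu, ← hv, sub_add_cancel, ih]

lemma lam_lam (i j : ℤ) (f : InvLaurent L) : lam d hd i (lam d hd j f) = lam d hd (i + j) f := by
  refine lam_unique d hd (fun i f => lam d hd i (lam d hd j f)) (fun i f => lam d hd (i + j) f)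
    ?_ ?_ ?_ i f
  · intro x; simp only [lam_zero, zero_add]
  · intro i x; exact lam_succ d hd i _
  · intro i x
    show lam d hd (i + 1 + j) x = _
    rw [← lam_succ]; congr 2; omega

lemma coeff_lam_one_single (a : L) (m : ℤ) :
    (lam d hd 1 (single 0 a)).coeff m = (if m = 1 then a else 0) + d m a := by
  rw [lam_one, coeff_shift, coeff_add, coeff_Delta_single, coeff_single]
  congr 1
  · congr 1; apply propext; omega
  · congr 2; omega

/-! ### The product -/

lemma star_support {f g : InvLaurent L} {n p : ℤ} (hf : Bd f n) (hg : Bd g p) (m : ℤ) :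
    (Function.support fun i => f.coeff i * (lam d hd i g).coeff m) ⊆
      (Finset.Icc (m - p) n : Finset ℤ) := by
  intro i hi
  rw [Finset.coe_Icc, Set.mem_Icc]
  by_contra hc
  apply hi
  show f.coeff i * (lam d hd i g).coeff m = 0
  by_cases h : n < i
  · rw [hf i h, zero_mul]
  · rw [Filt_lam d hd i g p hg m (by omega), mul_zero]

lemma star_support_finite (f g : InvLaurent L) (m : ℤ) :
    (Function.support fun i => f.coeff i * (lam d hd i g).coeff m).Finite := by
  obtain ⟨n, hf⟩ := exists_Bd f
  obtain ⟨p, hg⟩ := exists_Bd g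
  exact (Finset.finite_toSet _).subset (star_support d hd hf hg m)

/-- The product. -/
def star (f g : InvLaurent L) : InvLaurent L :=
  ⟨fun m => ∑ᶠ i, f.coeff i * (lam d hd i g).coeff m, by
    obtain ⟨n, hf⟩ := exists_Bd f
    obtain ⟨p, hg⟩ := exists_Bd g
    refine ⟨n + p, fun m hm => ?_⟩
    rw [finsum_eq_sum_of_support_subset _ (star_support d hd hf hg m),
      Finset.Icc_eq_empty (by omega), Finset.sum_empty]⟩

lemma coeff_star (f g : InvLaurent L) (m : ℤ) :
    (star d hd f g).coeff m = ∑ᶠ i, f.coeff i * (lam d hd i g).coeff m := rfl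

lemma Bd_star {f g : InvLaurent L} {n p : ℤ} (hf : Bd f n) (hg : Bd g p) :
    Bd (star d hd f g) (n + p) := by
  intro m hm
  rw [coeff_star, finsum_eq_sum_of_support_subset _ (star_support d hd hf hg m),
    Finset.Icc_eq_empty (by omega), Finset.sum_empty]

lemma star_lead {f g : InvLaurent L} {n p : ℤ} (hf : Bd f n) (hg : Bd g p) :
    (star d hd f g).coeff (n + p) = f.coeff n * g.coeff p := by
  rw [coeff_star, finsum_eq_sum_of_support_subset _ (star_support d hd hf hg _),
    show n + p - p = n by omega, Finset.Icc_self, Finset.sum_singleton, lam_lead d hd hg]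

lemma star_add (f g h : InvLaurent L) : star d hd f (g + h) = star d hd f g + star d hd f h := by
  ext m
  simp only [coeff_star, coeff_add, map_add, mul_add]
  exact finsum_add_distrib (star_support_finite d hd f g m) (star_support_finite d hd f h m)

lemma add_star (f g h : InvLaurent L) : star d hd (f + g) h = star d hd f h + star d hd g h := by
  ext m
  simp only [coeff_star, coeff_add, add_mul]
  exact finsum_add_distrib (star_support_finite d hd f h m) (star_support_finite d hd g h m)

lemma star_single (i : ℤ) (a : L) (g : InvLaurent L) :
    star d hd (single i a) g = lsmul a (lam d hd i g) := by
  ext m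
  rw [coeff_star, finsum_eq_single _ i, coeff_single, if_pos rfl, coeff_lsmul]
  intro j hj
  rw [coeff_single, if_neg hj, zero_mul]

lemma lsmul_star (b : L) (f g : InvLaurent L) :
    star d hd (lsmul b f) g = lsmul b (star d hd f g) := by
  ext m
  simp only [coeff_star, coeff_lsmul, mul_assoc]
  rw [mul_finsum]

lemma star_shift (j : ℤ) (f g : InvLaurent L) :
    star d hd f (shift j g) = shift j (star d hd f g) := by
  ext m
  simp only [coeff_star, lam_shift, coeff_shift]

/-- left star multiplication -/
def starL (f : InvLaurent L) : InvLaurent L →+ InvLaurent L :=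
  AddMonoidHom.mk' (star d hd f) (star_add d hd f)

/-- right star multiplication -/
def starR (g : InvLaurent L) : InvLaurent L →+ InvLaurent L :=
  AddMonoidHom.mk' (fun f => star d hd f g) (fun f f' => add_star d hd f f' g)

lemma starL_apply (f g : InvLaurent L) : starL d hd f g = star d hd f g := rfl
lemma starR_apply (f g : InvLaurent L) : starR d hd g f = star d hd f g := rfl

lemma Filt_starL {f : InvLaurent L} {n : ℤ} (hf : Bd f n) : Filt (starL d hd f) n :=
  fun g p hg => by rw [add_comm]; exact Bd_star d hd hf hg

lemma Filt_starR {g : InvLaurent L} {p : ℤ} (hg : Bd g p) : Filt (starR d hd g) p :=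
  fun _ _ hf => Bd_star d hd hf hg

lemma shift_star (j : ℤ) (f h : InvLaurent L) :
    star d hd (shift j f) h = star d hd f (lam d hd j h) := by
  obtain ⟨p, hp⟩ := exists_Bd h
  refine Filt.ext (F := (starR d hd h).comp (shift j)) (G := starR d hd (lam d hd j h))
    ((Filt_starR d hd hp).comp (Filt_shift j)) (Filt_starR d hd (Filt_lam d hd j _ _ hp)) ?_ f
  intro i a
  show star d hd (shift j (single i a)) h = star d hd (single i a) (lam d hd j h)
  rw [shift_single, star_single, star_single, lam_lam]

lemma single_eq_shift (j : ℤ) (a : L) : single j a = shift j (single 0 a) := by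
  rw [shift_single, zero_add]

lemma lsmul_shift (b : L) (j : ℤ) (f : InvLaurent L) :
    lsmul b (shift j f) = shift j (lsmul b f) := rfl

lemma lsmul_single (b : L) (j : ℤ) (a : L) : lsmul b (single j a) = single j (b * a) := by
  ext m; simp only [coeff_lsmul, coeff_single, mul_ite, mul_zero]

/-- The consequence of the Leibniz identity for constants gives associativity. -/
lemma star_assoc (H : ∀ a b, star d hd (lam d hd 1 (single 0 a)) (single 0 b) =
    lam d hd 1 (single 0 (a * b))) (f g h : InvLaurent L) :
    star d hd (star d hd f g) h = star d hd f (star d hd g h) := by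
  have s1 : ∀ b h, star d hd (lam d hd 1 (single 0 b)) h = lam d hd 1 (lsmul b h) := by
    intro b h
    refine Filt.ext (F := starL d hd (lam d hd 1 (single 0 b)))
      (G := (lam d hd 1).comp (lsmulHom b))
      (Filt_starL d hd (Filt_lam d hd 1 _ _ (Bd_single 0 b)))
      ((Filt_lam d hd 1).comp (Filt_lsmulHom b)) ?_ h
    intro l c
    show star d hd (lam d hd 1 (single 0 b)) (single l c) = lam d hd 1 (lsmul b (single l c))
    rw [lsmul_single, single_eq_shift l c, single_eq_shift l (b * c), star_shift, lam_shift, H]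
  have s2 : ∀ g h, star d hd (lam d hd 1 g) h = lam d hd 1 (star d hd g h) := by
    intro g h
    obtain ⟨p, hp⟩ := exists_Bd h
    refine Filt.ext (F := (starR d hd h).comp (lam d hd 1))
      (G := (lam d hd 1).comp (starR d hd h))
      ((Filt_starR d hd hp).comp (Filt_lam d hd 1))
      ((Filt_lam d hd 1).comp (Filt_starR d hd hp)) ?_ g
    intro j b
    show star d hd (lam d hd 1 (single j b)) h = lam d hd 1 (star d hd (single j b) h)
    rw [star_single, single_eq_shift, lam_shift, shift_star, s1]
  have s3 : ∀ i (x : InvLaurent L × InvLaurent L), star d hd (lam d hd i x.1) x.2 =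
      lam d hd i (star d hd x.1 x.2) := by
    refine lam_unique d hd (fun i (x : InvLaurent L × InvLaurent L) => star d hd (lam d hd i x.1) x.2)
      (fun i (x : InvLaurent L × InvLaurent L) => lam d hd i (star d hd x.1 x.2)) ?_ ?_ ?_
    · intro x; simp only [lam_zero]
    · intro i x
      show star d hd (lam d hd (i + 1) x.1) x.2 = _
      rw [lam_succ, s2]
    · intro i x; exact lam_succ d hd i _
  obtain ⟨n, hn⟩ := exists_Bd g
  obtain ⟨p, hp⟩ := exists_Bd h
  refine Filt.ext (F := (starR d hd h).comp (starR d hd g)) (G := starR d hd (star d hd g h))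
    ((Filt_starR d hd hp).comp (Filt_starR d hd hn)) (Filt_starR d hd (Bd_star d hd hn hp)) ?_ f
  intro i a
  show star d hd (star d hd (single i a) g) h = star d hd (single i a) (star d hd g h)
  rw [star_single, star_single, lsmul_star, s3 i (g, h)]

/-! ### The explicit formula -/

lemma list_sum_nonpos : ∀ js : List ℤ, (∀ j ∈ js, j ≤ 0) → js.sum ≤ 0
  | [], _ => by simp
  | j :: js, h => by
    have h1 := list_sum_nonpos js (fun x hx => h x (List.mem_cons_of_mem _ hx))
    have h2 := h j List.mem_cons_self
    rw [List.sum_cons]; omega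

lemma list_finite_nat (N : ℕ) :
    {js : List ℤ | (∀ j ∈ js, j ≤ 0) ∧ (js.length : ℤ) - js.sum ≤ N}.Finite := by
  induction N with
  | zero =>
    refine (Set.finite_singleton ([] : List ℤ)).subset ?_
    rintro js ⟨h1, h2⟩
    have := list_sum_nonpos js h1
    have h3 : js.length = 0 := by push_cast at h2; omega
    exact List.length_eq_zero_iff.mp h3
  | succ N ih =>
    refine ((Set.finite_singleton ([] : List ℤ)).union
      (Set.Finite.image2 List.cons (Set.finite_Icc (-(N : ℤ)) 0) ih)).subset ?_
    rintro js ⟨h1, h2⟩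
    cases js with
    | nil => left; rfl
    | cons j js =>
      right
      have h3 : ∀ x ∈ js, x ≤ 0 := fun x hx => h1 x (List.mem_cons_of_mem _ hx)
      have h4 := h1 j List.mem_cons_self
      have h5 := list_sum_nonpos js h3
      rw [List.sum_cons, List.length_cons] at h2
      push_cast at h2
      exact ⟨j, ⟨by omega, h4⟩, js, ⟨h3, by omega⟩, rfl⟩

lemma list_finite (N : ℤ) :
    {js : List ℤ | (∀ j ∈ js, j ≤ 0) ∧ (js.length : ℤ) - js.sum ≤ N}.Finite :=
  (list_finite_nat N.toNat).subset fun js h => ⟨h.1, by have := h.2; omega⟩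

open scoped Classical in
lemma finsum_of_injective {α β M : Type*} [AddCommMonoid M] (g : α → β)
    (hg : Function.Injective g) (f : β → M) (hf : ∀ b, b ∉ Set.range g → f b = 0) :
    ∑ᶠ b, f b = ∑ᶠ a, f (g a) := by
  rw [← finsum_mem_range hg]
  apply finsum_congr
  intro b
  by_cases hb : b ∈ Set.range g
  · exact (finsum_eq_if (p := b ∈ Set.range g)).trans (if_pos hb) |>.symm
  · rw [hf b hb]
    exact ((finsum_eq_if (p := b ∈ Set.range g)).trans (if_neg hb)).symm

open scoped Classical in
lemma coeff_Delta_pow (b : L) (k : ℕ) : ∀ m : ℤ, ((Delta d hd ^ k) (single 0 b)).coeff m =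
    ∑ᶠ js : List ℤ, if js.length = k ∧ (∀ j ∈ js, j ≤ 0) ∧ js.sum - (js.length : ℤ) = m
      then dcomp (fun j => d j) js b else 0 := by
  induction k with
  | zero =>
    intro m
    rw [Delta_pow_zero, coeff_single, finsum_eq_single _ []]
    · simp [dcomp, eq_comm]
    · intro js hjs
      rw [if_neg]
      rintro ⟨h, -⟩
      exact hjs (List.length_eq_zero_iff.mp h)
  | succ k ih =>
    intro m
    rw [Delta_pow_succ, coeff_Delta,
      finsum_of_injective (fun p : ℤ × List ℤ => p.1 :: p.2)
        (by rintro ⟨a, b⟩ ⟨c, e⟩ h; simpa using h)]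
    · rw [finsum_curry, ← finsum_comp_equiv (Equiv.subLeft (m + 1))]
      · apply finsum_congr
        intro j
        simp only [Equiv.subLeft_apply]
        rw [ih, show m + 1 - (m + 1 - j) = j by omega, AddMonoidHom.map_finsum]
        · apply finsum_congr
          intro js
          rw [apply_ite (d j), map_zero]
          by_cases hj : 0 < j
          · rw [if_neg (c := (j :: js).length = k + 1 ∧ _)]
            · rw [hd j hj]; simp
            · rintro ⟨-, h, -⟩
              have := h j List.mem_cons_self
              omega
          · congr 1
            apply propext
            simp only [List.length_cons, List.mem_cons, forall_eq_or_imp, List.sum_cons]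
            push_cast
            constructor
            · rintro ⟨h1, h2, h3⟩; exact ⟨by omega, ⟨by omega, h2⟩, by omega⟩
            · rintro ⟨h1, ⟨-, h2⟩, h3⟩; exact ⟨by omega, h2, by omega⟩
        · refine (list_finite (-(m + 1 - j))).subset ?_
          intro js hjs
          by_contra hc
          apply hjs
          show ite _ _ _ = _
          rw [if_neg]
          rintro ⟨h1, h2, h3⟩
          exact hc ⟨h2, by omega⟩
      · refine ((list_finite (-m)).preimage (f := fun p : ℤ × List ℤ => p.1 :: p.2)
          (Function.Injective.injOn (by rintro ⟨a, b⟩ ⟨c, e⟩ h; simpa using h))).subset ?_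
        intro p hp
        by_contra hc
        apply hp
        show ite _ _ _ = _
        rw [if_neg]
        rintro ⟨h1, h2, h3⟩
        exact hc ⟨h2, by dsimp only at *; omega⟩
    · intro js hjs
      rw [if_neg]
      rintro ⟨h, -⟩
      cases js with
      | nil => simp at h
      | cons j js => exact hjs ⟨(j, js), rfl⟩

open scoped Classical in
lemma coeff_lam_single (i j : ℤ) (b : L) (m : ℤ) : (lam d hd i (single j b)).coeff m =
    (if m = i + j then b else 0) +
    ∑ᶠ js : List ℤ, if js ≠ [] ∧ (∀ x ∈ js, x ≤ 0) ∧ js.sum - (js.length : ℤ) + i + j = m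
      then zbinom i js.length • dcomp (fun j => d j) js b else 0 := by
  set G : List ℤ → L := fun js =>
    if (∀ x ∈ js, x ≤ 0) ∧ js.sum - (js.length : ℤ) = m - i - j
      then zbinom i js.length • dcomp (fun j => d j) js b else 0 with hG
  have hfin := list_finite (-(m - i - j))
  have hsub : Function.support G ⊆ hfin.toFinset := by
    intro js hjs
    rw [Set.Finite.coe_toFinset]
    by_contra hc
    apply hjs
    rw [hG]
    show ite _ _ _ = _
    rw [if_neg]
    rintro ⟨h2, h3⟩
    exact hc ⟨h2, by omega⟩
  have h1 : (lam d hd i (single j b)).coeff m = ∑ᶠ js, G js := by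
    rw [single_eq_shift, lam_shift, coeff_shift, lam_apply, coeff_shift, coeff_E,
      finsum_eq_sum_of_support_subset _ hsub]
    have h2 : ∀ k : ℕ, zbinom i k • ((Delta d hd ^ k) (single 0 b)).coeff (m - j - i) =
        ∑ js ∈ hfin.toFinset, if js.length = k then G js else 0 := by
      intro k
      rw [coeff_Delta_pow, finsum_eq_sum_of_support_subset (s := hfin.toFinset), Finset.smul_sum]
      · apply Finset.sum_congr rfl
        intro js _
        rw [hG]
        simp only
        by_cases hk : js.length = k
        · subst hk
          simp only [true_and, if_true, smul_ite, smul_zero, sub_right_comm m j i]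
        · simp [hk]
      · intro js hjs
        rw [Set.Finite.coe_toFinset]
        by_contra hc
        apply hjs
        show ite _ _ _ = _
        rw [if_neg]
        rintro ⟨h1, h2, h3⟩
        exact hc ⟨h2, by omega⟩
    rw [finsum_congr h2, finsum_sum_comm]
    · apply Finset.sum_congr rfl
      intro js _
      rw [finsum_eq_single _ js.length, if_pos rfl]
      intro k hk
      rw [if_neg (Ne.symm hk)]
    · intro js _
      refine (Set.finite_singleton js.length).subset ?_
      intro k hk
      by_contra hc
      apply hk
      exact if_neg fun h => hc h.symm
  have h3 : ∀ js, G js = (if js = [] then G [] else 0) +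
      (if js ≠ [] ∧ (∀ x ∈ js, x ≤ 0) ∧ js.sum - (js.length : ℤ) + i + j = m
      then zbinom i js.length • dcomp (fun j => d j) js b else 0) := by
    intro js
    by_cases h : js = []
    · simp [h]
    · simp only [h, if_false, zero_add, ne_eq, not_false_eq_true, true_and, hG]
      congr 1
      apply propext
      refine and_congr_right fun _ => ?_
      omega
  rw [h1, finsum_congr h3, finsum_add_distrib]
  · congr 1
    rw [finsum_eq_single _ [] (fun js hjs => if_neg hjs), if_pos rfl, hG]
    simp only [List.not_mem_nil, IsEmpty.forall_iff, implies_true, true_and, List.sum_nil,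
      List.length_nil, zbinom_zero_right, one_smul, dcomp]
    congr 1
    apply propext
    push_cast
    omega
  · refine (Set.finite_singleton ([] : List ℤ)).subset ?_
    intro k hk
    by_contra hc
    apply hk
    exact if_neg fun h => hc h
  · refine hfin.subset ?_
    intro js hjs
    by_contra hc
    apply hjs
    show ite _ _ _ = _
    rw [if_neg]
    rintro ⟨h1, h2, h3⟩
    exact hc ⟨h2, by omega⟩

open scoped Classical in
lemma coeff_star_lam (a b : L) (m : ℤ) :
    (star d hd (lam d hd 1 (single 0 a)) (single 0 b)).coeff m =
      (if m = 1 then a * b else 0) + (a * d m b + d m a * b +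
      ∑ᶠ p : ℤ × List ℤ,
        if p.1 ≤ 0 ∧ p.2 ≠ [] ∧ (∀ j ∈ p.2, j ≤ 0) ∧
            p.2.sum - (p.2.length : ℤ) + p.1 = m
        then zbinom p.1 p.2.length • (d p.1 a * dcomp (fun j => d j) p.2 b) else 0) := by
  have hP : Function.HasFiniteSupport (fun p : ℤ × List ℤ =>
        if p.1 ≤ 0 ∧ p.2 ≠ [] ∧ (∀ j ∈ p.2, j ≤ 0) ∧
            p.2.sum - (p.2.length : ℤ) + p.1 = m
        then zbinom p.1 p.2.length • (d p.1 a * dcomp (fun j => d j) p.2 b) else 0) := by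
    refine ((Set.finite_Icc m 0).prod (list_finite (-m))).subset ?_
    intro p hp
    by_contra hc
    apply hp
    show ite _ _ _ = _
    rw [if_neg]
    rintro ⟨h1, h2, h3, h4⟩
    have := list_sum_nonpos _ h3
    exact hc ⟨⟨by omega, h1⟩, ⟨h3, by omega⟩⟩
  have hQ : Function.HasFiniteSupport (fun l : ℤ => d l a * (lam d hd l (single 0 b)).coeff m) := by
    refine (Set.finite_Icc m 0).subset ?_
    intro l hl
    by_contra hc
    apply hl
    show d l a * (lam d hd l (single 0 b)).coeff m = 0
    by_cases h : 0 < l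
    · rw [hd l h]; simp
    · rw [Filt_lam d hd l _ _ (Bd_single 0 b) m (by rw [Set.mem_Icc] at hc; omega), mul_zero]
  rw [coeff_star]
  simp only [coeff_lam_one_single, add_mul]
  rw [finsum_add_distrib _ hQ]
  · have e1 : ∑ᶠ l : ℤ, (if l = 1 then a else 0) * (lam d hd l (single 0 b)).coeff m =
        (if m = 1 then a * b else 0) + a * d m b := by
      rw [finsum_eq_single _ 1, if_pos rfl, coeff_lam_one_single, mul_add, mul_ite, mul_zero]
      intro l hl
      rw [if_neg hl, zero_mul]
    have e2 : ∀ l : ℤ, d l a * (lam d hd l (single 0 b)).coeff m =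
        (if l = m then d m a * b else 0) + ∑ᶠ js : List ℤ,
          if l ≤ 0 ∧ js ≠ [] ∧ (∀ j ∈ js, j ≤ 0) ∧ js.sum - (js.length : ℤ) + l = m
          then zbinom l js.length • (d l a * dcomp (fun j => d j) js b) else 0 := by
      intro l
      rw [coeff_lam_single, mul_add, mul_finsum]
      congr 1
      · by_cases h : l = m
        · subst h; simp
        · rw [if_neg (by omega), if_neg h, mul_zero]
      · apply finsum_congr
        intro js
        by_cases h : 0 < l
        · rw [hd l h]; simp
        · have h' : l ≤ 0 := by omega
          simp only [h', true_and, add_zero, mul_ite, mul_zero, mul_smul_comm]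
    rw [e1, finsum_congr e2, finsum_add_distrib, finsum_curry _ hP,
      finsum_eq_single _ m (fun l hl => if_neg hl), if_pos rfl]
    · ring
    · refine (Set.finite_singleton m).subset ?_
      intro k hk
      by_contra hc
      apply hk
      exact if_neg fun h => hc h
    · refine (Set.finite_Icc m 0).subset ?_
      intro l hl
      by_contra hc
      apply hl
      show finsum _ = _
      apply finsum_eq_zero_of_forall_eq_zero
      intro js
      rw [if_neg]
      rintro ⟨h1, h2, h3, h4⟩
      have := list_sum_nonpos _ h3
      exact hc ⟨by omega, h1⟩
  · refine (Set.finite_singleton (1 : ℤ)).subset ?_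
    intro k hk
    by_contra hc
    apply hk
    show ite _ _ _ * _ = _
    rw [if_neg (c := k = 1) fun h => hc h, zero_mul]

lemma leibniz_iff : LeibnizStar (fun j => d j) ↔
    ∀ a b, star d hd (lam d hd 1 (single 0 a)) (single 0 b) = lam d hd 1 (single 0 (a * b)) := by
  constructor
  · intro H a b
    ext m
    rw [coeff_star_lam, coeff_lam_one_single]
    congr 1
    by_cases hm : m ≤ 0
    · exact (H m hm a b).symm
    · rw [hd m (by omega)]
      simp only [AddMonoidHom.zero_apply, mul_zero, zero_mul, add_zero, zero_add]
      apply finsum_eq_zero_of_forall_eq_zero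
      intro p
      rw [if_neg]
      rintro ⟨h1, h2, h3, h4⟩
      have := list_sum_nonpos _ h3
      omega
  · intro H i _ a b
    have := congrArg (fun f => f.coeff i) (H a b)
    simp only [coeff_star_lam, coeff_lam_one_single] at this
    exact (add_left_cancel this).symm

/-! ### Degrees and continuity -/

lemma exists_lead {f : InvLaurent L} (hf : f ≠ 0) : ∃ n, Bd f n ∧ f.coeff n ≠ 0 := by
  obtain ⟨N, hN⟩ := support_bddAbove f
  obtain ⟨m, hm, hmax⟩ := Int.exists_greatest_of_bdd ⟨N, fun i hi => hN hi⟩ (support_nonempty hf)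
  refine ⟨m, fun i hi => ?_, hm⟩
  by_contra hc
  have := hmax i hc
  omega

lemma deg_eq {f : InvLaurent L} {n : ℤ} (h : Bd f n) (h' : f.coeff n ≠ 0) : deg f = n := by
  have hf : f ≠ 0 := by rintro rfl; exact h' rfl
  refine le_antisymm ?_ (le_deg h')
  rw [deg, if_neg hf]
  have : sSup {i : ℤ | f.coeff i ≠ 0} ≤ n := csSup_le (support_nonempty hf) (fun i hi => by
    by_contra hc; exact hi (h i (by omega)))
  exact_mod_cast this

lemma deg_le_iff (f : InvLaurent L) (n : ℤ) : deg f ≤ n ↔ Bd f n := by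
  constructor
  · intro h i hi
    by_contra hc
    have h1 := (le_deg hc).trans h
    have : i ≤ n := by exact_mod_cast h1
    omega
  · intro h
    by_cases hf : f = 0
    · rw [(deg_eq_bot_iff f).mpr hf]; exact bot_le
    · obtain ⟨m, hm, hm'⟩ := exists_lead hf
      rw [deg_eq hm hm']
      have : m ≤ n := by by_contra hc; exact hm' (h m (by omega))
      exact_mod_cast this

lemma deg_star (f g : InvLaurent L) : deg (star d hd f g) = deg f + deg g := by
  by_cases hf : f = 0
  · have : star d hd f g = 0 := by rw [hf]; exact map_zero (starR d hd g)
    rw [this, (deg_eq_bot_iff (0 : InvLaurent L)).mpr rfl, hf,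
      (deg_eq_bot_iff (0 : InvLaurent L)).mpr rfl, WithBot.bot_add]
  by_cases hg : g = 0
  · have : star d hd f g = 0 := by rw [hg]; exact map_zero (starL d hd f)
    rw [this, (deg_eq_bot_iff (0 : InvLaurent L)).mpr rfl, hg,
      (deg_eq_bot_iff (0 : InvLaurent L)).mpr rfl, WithBot.add_bot]
  obtain ⟨n, hn, hn'⟩ := exists_lead hf
  obtain ⟨p, hp, hp'⟩ := exists_lead hg
  rw [deg_eq hn hn', deg_eq hp hp', deg_eq (Bd_star d hd hn hp)]
  · push_cast; rfl
  · rw [star_lead d hd hn hp]; exact mul_ne_zero hn' hp'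

lemma edeg_add (x y : WithBot ℤ) : edeg (x + y) = edeg x * edeg y := by
  cases x with
  | bot => rw [WithBot.bot_add]; simp [edeg]
  | coe x =>
    cases y with
    | bot => rw [WithBot.add_bot]; simp [edeg]
    | coe y =>
      show Real.exp ((x + y : ℤ) : ℝ) = Real.exp x * Real.exp y
      push_cast
      exact Real.exp_add _ _

lemma dist_def (f g : InvLaurent L) : dist f g = edeg (deg (f - g)) := rfl

lemma continuous_star : Continuous fun p : InvLaurent L × InvLaurent L => star d hd p.1 p.2 := by
  rw [continuous_iff_continuousAt]
  rintro ⟨f0, g0⟩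
  rw [ContinuousAt, tendsto_iff_dist_tendsto_zero]
  have h1 : ∀ p : InvLaurent L × InvLaurent L, dist (star d hd p.1 p.2) (star d hd f0 g0) ≤
      dist p.1 f0 * dist p.2 0 + dist f0 0 * dist p.2 g0 := by
    intro p
    refine (dist_triangle _ (star d hd f0 p.2) _).trans (le_of_eq ?_)
    congr 1
    · rw [dist_def, dist_def, dist_def, sub_zero, ← edeg_add, ← deg_star d hd]
      congr 2
      exact (map_sub (starR d hd p.2) p.1 f0).symm
    · rw [dist_def, dist_def, dist_def, sub_zero, ← edeg_add, ← deg_star d hd]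
      congr 2
      exact (map_sub (starL d hd f0) p.2 g0).symm
  have h2 : Continuous fun p : InvLaurent L × InvLaurent L =>
      dist p.1 f0 * dist p.2 0 + dist f0 0 * dist p.2 g0 := by fun_prop
  have h3 := h2.tendsto (f0, g0)
  simp only [dist_self, zero_mul, mul_zero, add_zero] at h3
  exact squeeze_zero (fun _ => dist_nonneg) h1 h3

lemma leibniz_one_aux (d : ℤ → L →+ L) (hd : ∀ j, 0 < j → d j = 0)
    (H : LeibnizStar (fun j => d j)) (j : ℤ) : d j 1 = 0 := by
  have key : ∀ n : ℕ, ∀ i : ℤ, -(n : ℤ) < i → d i 1 = 0 := by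
    intro n
    induction n with
    | zero => intro i hi; rw [hd i (by simpa using hi)]; rfl
    | succ n ih =>
      intro i hi
      by_cases hi' : -(n : ℤ) < i
      · exact ih i hi'
      · have h := H i (by omega) 1 1
        simp only [one_mul, mul_one] at h
        rw [finsum_eq_zero_of_forall_eq_zero, add_zero] at h
        · exact (left_eq_add.mp h)
        · intro p
          by_cases hp : p.1 ≤ 0 ∧ p.2 ≠ [] ∧ (∀ j ∈ p.2, j ≤ 0) ∧
            p.2.sum - (p.2.length : ℤ) + p.1 = i
          · rw [if_pos hp]
            obtain ⟨h1, h2, h3, h4⟩ := hp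
            have h5 := list_sum_nonpos _ h3
            have h6 := List.length_pos_of_ne_nil h2
            rw [ih p.1 (by push_cast at hi; omega), zero_mul, smul_zero]
          · rw [if_neg hp]
  exact key (1 - j).toNat j (by omega)

lemma lam_single_one (H : LeibnizStar (fun j => d j)) (k : ℤ) :
    lam d hd k (single 0 1) = single k (1 : L) := by
  have h1 : lam d hd 1 (single 0 1) = single 1 (1 : L) := by
    ext m
    rw [coeff_lam_one_single, leibniz_one_aux d hd H, add_zero, coeff_single]
  refine lam_unique d hd (fun k (_ : Unit) => lam d hd k (single 0 1))
    (fun k _ => single k (1 : L)) ?_ ?_ ?_ k ()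
  · intro _; exact lam_zero d hd _
  · intro i _; exact lam_succ d hd i _
  · intro i _
    show single (i + 1) 1 = lam d hd 1 (single i 1)
    rw [single_eq_shift i, lam_shift, h1, shift_single, add_comm]

/-- The deformed product attached to `d`. -/
def starProduct (H : LeibnizStar (fun j => d j)) : DeformedProduct L where
  mul := star d hd
  mul_assoc := star_assoc d hd ((leibniz_iff d hd).mp H)
  left_distrib := star_add d hd
  right_distrib := add_star d hd
  continuous_mul := continuous_star d hd
  lsmul_eq b f := by rw [star_single, lam_zero]
  T_mul_T i j := by
    rw [T, T, T, star_single, single_eq_shift j, lam_shift, lam_single_one d hd H, shift_single]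
    ext m; simp [coeff_lsmul]
  deg_mul := deg_star d hd

lemma lsmul_one_T (a : L) (i : ℤ) : lsmul a (T L i) = single i a := by
  rw [T, lsmul_single, mul_one]

/-- left multiplication -/
def mulL (μ : DeformedProduct L) (f : InvLaurent L) : InvLaurent L →+ InvLaurent L :=
  AddMonoidHom.mk' (μ.mul f) (μ.left_distrib f)

/-- right multiplication -/
def mulR (μ : DeformedProduct L) (g : InvLaurent L) : InvLaurent L →+ InvLaurent L :=
  AddMonoidHom.mk' (fun f => μ.mul f g) (fun f f' => μ.right_distrib f f' g)

lemma Bd_mul (μ : DeformedProduct L) {f g : InvLaurent L} {n p : ℤ} (hf : Bd f n) (hg : Bd g p) :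
    Bd (μ.mul f g) (n + p) := by
  rw [← deg_le_iff] at *
  rw [μ.deg_mul]
  push_cast
  exact add_le_add hf hg

lemma Filt_mulL (μ : DeformedProduct L) {f : InvLaurent L} {n : ℤ} (hf : Bd f n) :
    Filt (mulL μ f) n :=
  fun g p hg => by rw [add_comm]; exact Bd_mul μ hf hg

lemma Filt_mulR (μ : DeformedProduct L) {g : InvLaurent L} {p : ℤ} (hg : Bd g p) :
    Filt (mulR μ g) p :=
  fun _ _ hf => Bd_mul μ hf hg

lemma single_eq_mul (μ : DeformedProduct L) (i : ℤ) (a : L) :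
    single i a = μ.mul (single 0 a) (T L i) := by
  rw [μ.lsmul_eq, lsmul_one_T]

lemma mul_T (μ : DeformedProduct L) (f : InvLaurent L) (j : ℤ) : μ.mul f (T L j) = shift j f := by
  refine Filt.ext (F := mulR μ (T L j)) (G := shift j)
    (Filt_mulR μ (Bd_single j 1)) (Filt_shift j) ?_ f
  intro i a
  show μ.mul (single i a) (T L j) = shift j (single i a)
  rw [single_eq_mul μ, μ.mul_assoc, μ.T_mul_T, μ.lsmul_eq, lsmul_one_T, ← single_eq_mul μ,
    shift_single]

/-- Any deformed product with the prescribed commutation is the explicit one. -/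
lemma mul_eq_star (μ : DeformedProduct L)
    (h : ∀ a, μ.mul (T L 1) (single 0 a) = lam d hd 1 (single 0 a)) (f g : InvLaurent L) :
    μ.mul f g = star d hd f g := by
  have s1 : ∀ g, μ.mul (T L 1) g = lam d hd 1 g := by
    intro g
    refine Filt.ext (F := mulL μ (T L 1)) (G := lam d hd 1)
      (Filt_mulL μ (Bd_single 1 1)) (Filt_lam d hd 1) ?_ g
    intro j c
    show μ.mul (T L 1) (single j c) = lam d hd 1 (single j c)
    rw [single_eq_mul μ, ← μ.mul_assoc, h, mul_T, mul_T, lam_shift]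
  have s2 : ∀ i g, μ.mul (T L i) g = lam d hd i g := by
    refine lam_unique d hd (fun i g => μ.mul (T L i) g) (fun i g => lam d hd i g) ?_ ?_ ?_
    · intro g
      show μ.mul (single 0 1) g = lam d hd 0 g
      rw [μ.lsmul_eq, lam_zero]
      ext m; rw [coeff_lsmul, one_mul]
    · intro i g
      show μ.mul (T L (i + 1)) g = lam d hd 1 (μ.mul (T L i) g)
      rw [← s1, ← μ.mul_assoc, μ.T_mul_T, add_comm]
    · intro i g; exact lam_succ d hd i g
  obtain ⟨p, hp⟩ := exists_Bd g
  refine Filt.ext (F := mulR μ g) (G := starR d hd g) (Filt_mulR μ hp) (Filt_starR d hd hp) ?_ f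
  intro i a
  show μ.mul (single i a) g = star d hd (single i a) g
  rw [single_eq_mul μ, μ.mul_assoc, s2, μ.lsmul_eq, ← single_eq_mul μ, star_single]

end Delta

lemma DeformedProduct_ext {μ ν : DeformedProduct L} (h : μ.mul = ν.mul) : μ = ν := by
  cases μ; cases ν; cases h; rfl

open scoped Classical in
/-- Truncation of `δ` to nonpositive indices, as additive maps. -/
def dOf (δ : ℤ → L → L) (hadd : ∀ i : ℤ, i ≤ 0 → ∀ a b : L, δ i (a + b) = δ i a + δ i b)
    (j : ℤ) : L →+ L :=
  if h : j ≤ 0 then AddMonoidHom.mk' (δ j) (hadd j h) else 0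

variable (δ : ℤ → L → L) (hadd : ∀ i : ℤ, i ≤ 0 → ∀ a b : L, δ i (a + b) = δ i a + δ i b)

lemma dOf_pos (j : ℤ) (h : 0 < j) : dOf δ hadd j = 0 := dif_neg (by omega)

lemma dOf_apply (j : ℤ) (h : j ≤ 0) (a : L) : dOf δ hadd j a = δ j a := by
  rw [dOf, dif_pos h]; rfl

lemma dcomp_dOf (b : L) : ∀ js : List ℤ, (∀ j ∈ js, j ≤ 0) →
    dcomp (fun j => dOf δ hadd j) js b = dcomp δ js b
  | [], _ => rfl
  | j :: js, h => by
    rw [dcomp, dcomp, dcomp_dOf b js (fun x hx => h x (List.mem_cons_of_mem _ hx)),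
      dOf_apply δ hadd j (h j List.mem_cons_self)]

lemma leibniz_dOf : LeibnizStar (fun j => dOf δ hadd j) ↔ LeibnizStar δ := by
  unfold LeibnizStar
  refine forall_congr' fun i => forall_congr' fun hi => forall_congr' fun a => forall_congr' fun b => ?_
  simp only [dOf_apply δ hadd i hi]
  refine Eq.congr_right (congrArg _ (finsum_congr fun p => ?_))
  by_cases hp : p.1 ≤ 0 ∧ p.2 ≠ [] ∧ (∀ j ∈ p.2, j ≤ 0) ∧
            p.2.sum - (p.2.length : ℤ) + p.1 = i
  · rw [if_pos hp, if_pos hp, dcomp_dOf δ hadd b p.2 hp.2.2.1, dOf_apply δ hadd _ hp.1]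
  · rw [if_neg hp, if_neg hp]

lemma hasDelta_iff (μ : DeformedProduct L) : HasDelta μ δ ↔ ∀ a, μ.mul (T L 1) (single 0 a) =
    lam (dOf δ hadd) (dOf_pos δ hadd) 1 (single 0 a) := by
  unfold HasDelta
  refine forall_congr' fun a => ?_
  rw [InvLaurent.ext_iff]
  refine forall_congr' fun i => ?_
  rw [coeff_lam_one_single]
  refine Eq.congr_right ?_
  by_cases h1 : i = 1
  · rw [if_pos h1, if_pos h1, dOf_pos δ hadd i (by omega)]; simp
  · rw [if_neg h1, if_neg h1, zero_add]
    split_ifs with h2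
    · rw [dOf_apply δ hadd i h2]
    · rw [dOf_pos δ hadd i (by omega)]; rfl

end Aux

end InvLaurent

end

open InvLaurent in
/-- for additive maps `δ_i : L → L` (`i ≤ 0`) on a field `L` of characteristic `0`,
there exists a (necessarily unique) deformed Laurent series product on `L((T⁻¹))` with
`T·a = aT + Σ_{i≤0} δ_i(a)T^i` if and only if the `δ_i` satisfy the Leibniz-type identity (★);
moreover any such product is given on monomials by
`aT^i · bT^j = ab T^{i+j} + Σ_{k≥1} Σ binom(i,k) a δ_{j₁}⋯δ_{j_k}(b) T^{j₁+⋯+j_k−k+i+j}`. -/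
theorem deformedProduct_exists_iff_leibnizStar (L : Type*) [Field L] [CharZero L]
    (δ : ℤ → L → L)
    (hadd : ∀ i : ℤ, i ≤ 0 → ∀ a b : L, δ i (a + b) = δ i a + δ i b) :
    ((∃! μ : DeformedProduct L, HasDelta μ δ) ↔ LeibnizStar δ) ∧
    (∀ μ : DeformedProduct L, HasDelta μ δ →
      ∀ (i j : ℤ) (a b : L) (m : ℤ),
        (μ.mul (single i a) (single j b)).coeff m =
          (if m = i + j then a * b else 0) +
          ∑ᶠ js : List ℤ,
            if js ≠ [] ∧ (∀ x ∈ js, x ≤ 0) ∧ js.sum - (js.length : ℤ) + i + j = m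
            then zbinom i js.length • (a * dcomp δ js b) else 0) := by
  have formula : ∀ μ : DeformedProduct L, HasDelta μ δ → μ.mul =
      star (dOf δ hadd) (dOf_pos δ hadd) := fun μ hμ => by
    funext f g
    exact mul_eq_star _ _ μ ((hasDelta_iff δ hadd μ).mp hμ) f g
  refine ⟨⟨?_, ?_⟩, ?_⟩
  · rintro ⟨μ, hμ, -⟩
    rw [← leibniz_dOf δ hadd, leibniz_iff _ (dOf_pos δ hadd)]
    have h := (hasDelta_iff δ hadd μ).mp hμ
    intro a b
    rw [← h, ← h, ← formula μ hμ, μ.mul_assoc, μ.lsmul_eq, lsmul_single]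
  · intro H
    rw [← leibniz_dOf δ hadd] at H
    refine ⟨starProduct _ (dOf_pos δ hadd) H, ?_, ?_⟩
    · refine (hasDelta_iff δ hadd _).mpr fun a => ?_
      show star _ _ (single 1 1) (single 0 a) = _
      rw [star_single]
      ext m; rw [coeff_lsmul, one_mul]
    · intro ν hν
      exact DeformedProduct_ext (formula ν hν)
  · intro μ hμ i j a b m
    rw [formula μ hμ, star_single, coeff_lsmul, coeff_lam_single, mul_add, mul_ite, mul_zero,
      mul_finsum]
    congr 1
    apply finsum_congr
    intro js
    by_cases hjs : js ≠ [] ∧ (∀ x ∈ js, x ≤ 0) ∧ js.sum - (js.length : ℤ) + i + j = m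
    · rw [if_pos hjs, if_pos hjs, dcomp_dOf δ hadd b js hjs.2.1, mul_smul_comm]
    · rw [if_neg hjs, if_neg hjs, mul_zero]
end

section
/- Let K be a field of characteristic 0, let l ∈ ℕ, and let p ∈ K[z] be a polynomial with deg p ≤ l. Then for every z ∈ K: Σ_{t=0}^{l} (−1)^{l−t} · binom(z, t) · binom(z−1−t, l−t) · p(t) = p(z), where p(t) denotes evaluation of p at the image of the natural number t in K. -/
noncomputable section

open scoped Classical

/-- `Tsum x i l = Σ_{(j₁,…,j_i) ∈ T(i,l)} binom(x,j₁)⋯binom(x,j_i)`, the sum over all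
`i`-tuples of positive integers with sum `l` (a finitely supported sum). -/
def Tsum (x : ℝ) (i l : ℕ) : ℝ :=
  ∑ᶠ c : Fin i → ℕ,
    if (∀ t, 1 ≤ c t) ∧ (∑ t, c t) = l then ∏ t, gbinom x (c t) else 0

end

open Polynomial in
theorem gbinom_poly_aux {K : Type*} [Field K] (c : K) (k : ℕ) :
    ∃ q : Polynomial K, q.natDegree ≤ k ∧ ∀ z, q.eval z = gbinom (z - c) k := by
  refine ⟨(∏ i ∈ Finset.range k, (X - C (c + (i : K)))) * C ((k.factorial : K)⁻¹), ?_, ?_⟩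
  · refine (natDegree_mul_C_le _ _).trans ?_
    refine (natDegree_prod_le _ _).trans ?_
    simp only [natDegree_X_sub_C]
    simp
  · intro z
    simp only [gbinom, eval_mul, eval_prod, eval_sub, eval_X, eval_C, div_eq_mul_inv, sub_sub]

theorem gbinom_lt_aux {K : Type*} [Field K] (n k : ℕ) (h : n < k) : gbinom (n : K) k = 0 := by
  unfold gbinom
  rw [Finset.prod_eq_zero (Finset.mem_range.2 h) (sub_self _), zero_div]

theorem gbinom_self_aux {K : Type*} [Field K] [CharZero K] (n : ℕ) : gbinom (n : K) n = 1 := by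
  unfold gbinom
  have h : ∏ i ∈ Finset.range n, ((n : K) - (i : K)) = (n.factorial : K) := by
    induction n with
    | zero => simp
    | succ n ih =>
      rw [Finset.prod_range_succ', Nat.factorial_succ]
      push_cast
      rw [← ih]
      simp only [add_sub_add_right_eq_sub]
      ring
  rw [h, div_self (by exact_mod_cast n.factorial_ne_zero)]

theorem gbinom_neg_one_aux {K : Type*} [Field K] [CharZero K] (n : ℕ) :
    gbinom (-1 : K) n = (-1) ^ n := by
  unfold gbinom
  have h : ∏ i ∈ Finset.range n, ((-1 : K) - (i : K)) = (-1) ^ n * (n.factorial : K) := by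
    induction n with
    | zero => simp
    | succ n ih =>
      rw [Finset.prod_range_succ, Nat.factorial_succ, ih]
      push_cast
      ring
  rw [h, mul_div_assoc, div_self (by exact_mod_cast n.factorial_ne_zero), mul_one]

/-- in a field `K` of characteristic `0`, for any `l ∈ ℕ` and any polynomial `p`
with `deg p ≤ l`, and any `z ∈ K`:
`Σ_{t=0}^{l} (−1)^{l−t} binom(z,t) binom(z−1−t,l−t) p(t) = p(z)`. -/
theorem binom_interpolation (K : Type*) [Field K] [CharZero K] (l : ℕ)
    (p : Polynomial K) (hp : p.degree ≤ (l : ℕ)) (z : K) :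
    ∑ t ∈ Finset.range (l + 1),
        (-1 : K) ^ (l - t) * gbinom z t * gbinom (z - 1 - t) (l - t) * p.eval (t : K) =
      p.eval z := by
  choose q hqd hq using fun (c : K) (k : ℕ) => gbinom_poly_aux c k
  let Q : Polynomial K := ∑ t ∈ Finset.range (l + 1),
    Polynomial.C ((-1 : K) ^ (l - t) * p.eval (t : K)) * (q 0 t * q (1 + t) (l - t))
  have hQ : ∀ z : K, Q.eval z = ∑ t ∈ Finset.range (l + 1),
        (-1 : K) ^ (l - t) * gbinom z t * gbinom (z - 1 - t) (l - t) * p.eval (t : K) := by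
    intro z
    simp only [Q, Polynomial.eval_finsetSum, Polynomial.eval_mul, Polynomial.eval_C, hq,
      sub_zero, sub_sub]
    exact Finset.sum_congr rfl fun t _ => by ring
  have hQd : Q.natDegree ≤ l := by
    refine Polynomial.natDegree_sum_le_of_forall_le _ _ fun t ht => ?_
    refine (Polynomial.natDegree_C_mul_le _ _).trans ?_
    refine Polynomial.natDegree_mul_le.trans ?_
    have h1 := hqd 0 t
    have h2 := hqd (1 + t) (l - t)
    have h3 := Finset.mem_range.1 ht
    omega
  have hlt : ((l : ℕ) : WithBot ℕ) < ((Finset.range (l + 1)).card : WithBot ℕ) := by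
    rw [Finset.card_range]
    exact_mod_cast Nat.lt_succ_self l
  have key : Q = p := by
    refine Polynomial.eq_of_degrees_lt_of_eval_index_eq (Finset.range (l + 1))
      (v := fun n : ℕ => (n : K)) (Nat.cast_injective.injOn)
      ((Polynomial.degree_le_of_natDegree_le hQd).trans_lt hlt) (hp.trans_lt hlt) ?_
    intro s hs
    rw [hQ, Finset.sum_eq_single_of_mem s hs]
    · rw [gbinom_self_aux, show (s : K) - 1 - s = -1 by ring, gbinom_neg_one_aux, mul_one,
        ← mul_pow]
      simp
    · intro t ht hts
      have h3 := Finset.mem_range.1 hs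
      rcases lt_or_gt_of_ne hts with h | h
      · have e : (s : K) - 1 - t = ((s - 1 - t : ℕ) : K) := by
          obtain ⟨d, rfl⟩ := Nat.exists_eq_add_of_lt h
          rw [show t + d + 1 - 1 - t = d by omega]
          push_cast
          ring
        rw [e, gbinom_lt_aux (s - 1 - t) (l - t) (by omega)]
        ring
      · rw [gbinom_lt_aux _ _ h]
        ring
  rw [← hQ, key]
end

section
/- Let x be a real number and let i, l be integers with 1 ≤ i ≤ l. Then Σ_{(j_1,…,j_i)∈T(i,l)} binom(x, j_1)⋯binom(x, j_i) = Σ_{j=0}^{i−1} (−1)^j · C(i,j) · binom((i−j)·x, l), where C(i,j) is the ordinary binomial coefficient. (In the paper x = ν^{-1} for an integer ν ≥ 1.) -/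
lemma gbinom_eq_choose (a : ℝ) (k : ℕ) : gbinom a k = Ring.choose a k := by
  rw [Ring.choose_eq_smul, gbinom, ← Polynomial.aeval_eq_smeval, Polynomial.aeval_def,
    Polynomial.eval₂_eq_eval_map, descPochhammer_map, descPochhammer_eval_eq_prod_range, div_eq_inv_mul, smul_eq_mul]

lemma binomSer_nat_mul (x : ℝ) (n : ℕ) :
    PowerSeries.binomialSeries ℝ ((n : ℝ) * x) = (PowerSeries.binomialSeries ℝ x) ^ n := by
  induction n with
  | zero => simp
  | succ n ih =>
    rw [pow_succ, ← ih, ← PowerSeries.binomialSeries_add]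
    congr 1
    push_cast
    ring

lemma coeff_sub_one (x : ℝ) (k : ℕ) :
    PowerSeries.coeff k (PowerSeries.binomialSeries ℝ x - 1) = if 1 ≤ k then gbinom x k else 0 := by
  rw [map_sub, PowerSeries.binomialSeries_coeff, gbinom_eq_choose, PowerSeries.coeff_one]
  rcases k with _ | k <;> simp

lemma Tsum_eq_coeff (x : ℝ) (i l : ℕ) :
    Tsum x i l = PowerSeries.coeff l ((PowerSeries.binomialSeries ℝ x - 1) ^ i) := by
  have h : (PowerSeries.binomialSeries ℝ x - 1) ^ i
      = ∏ _t : Fin i, (PowerSeries.binomialSeries ℝ x - 1) := by simp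
  rw [h, PowerSeries.coeff_prod, Tsum,
    finsum_eq_sum_of_support_subset (s := (Finset.finsuppAntidiag Finset.univ l).map
      ⟨fun c : Fin i →₀ ℕ => (c : Fin i → ℕ), DFunLike.coe_injective⟩)]
  · rw [Finset.sum_map]
    refine Finset.sum_congr rfl fun c hc => ?_
    have hs : ∑ t, c t = l := (Finset.mem_finsuppAntidiag.1 hc).1
    simp only [coeff_sub_one]
    by_cases hp : ∀ t, 1 ≤ c t
    · have : (∀ t, 1 ≤ c t) ∧ ∑ t, c t = l := ⟨hp, hs⟩
      refine (if_pos this).trans ?_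
      exact Finset.prod_congr rfl fun t _ => (if_pos (hp t)).symm
    · refine (if_neg fun h => hp h.1).trans ?_
      push Not at hp
      obtain ⟨t, ht⟩ := hp
      exact (Finset.prod_eq_zero (Finset.mem_univ t) (if_neg (by omega))).symm
  · intro c hc
    by_contra hn
    apply hc
    refine if_neg fun h => hn ?_
    rw [Finset.mem_coe, Finset.mem_map]
    exact ⟨Finsupp.equivFunOnFinite.symm c, by simp [h.2], rfl⟩

/-- for a real `x` and integers `1 ≤ i ≤ l`:
`Σ_{(j₁,…,j_i)∈T(i,l)} binom(x,j₁)⋯binom(x,j_i) = Σ_{j=0}^{i−1} (−1)^j C(i,j) binom((i−j)x, l)`. -/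
theorem Tsum_eq_alternating (x : ℝ) (i l : ℕ) (hi : 1 ≤ i) (hil : i ≤ l) :
    Tsum x i l =
      ∑ j ∈ Finset.range i, (-1 : ℝ) ^ j * (i.choose j : ℝ) * gbinom (((i - j : ℕ) : ℝ) * x) l := by
  rw [Tsum_eq_coeff, sub_eq_neg_add, add_pow, Finset.sum_range_succ, map_add, map_sum]
  have h0 : PowerSeries.coeff l ((-1 : PowerSeries ℝ) ^ i *
      (PowerSeries.binomialSeries ℝ x) ^ (i - i) * (i.choose i : PowerSeries ℝ)) = 0 := by
    have : (-1 : PowerSeries ℝ) ^ i = PowerSeries.C ((-1 : ℝ) ^ i) := by simp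
    rw [this]
    rw [Nat.sub_self, pow_zero, mul_one, Nat.choose_self, Nat.cast_one, mul_one, PowerSeries.coeff_C, if_neg (by omega)]
  rw [h0, add_zero]
  refine Finset.sum_congr rfl fun j _ => ?_
  have : (-1 : PowerSeries ℝ) ^ j * (PowerSeries.binomialSeries ℝ x) ^ (i - j)
      * (i.choose j : PowerSeries ℝ) = PowerSeries.C ((-1 : ℝ) ^ j * (i.choose j : ℝ)) *
        PowerSeries.binomialSeries ℝ (((i - j : ℕ) : ℝ) * x) := by
    rw [binomSer_nat_mul]
    simp
    ring
  rw [this, PowerSeries.coeff_C_mul, PowerSeries.binomialSeries_coeff, gbinom_eq_choose]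
  simp
end

section
/- Let ν be a nonzero real number and let l, u be integers with l ≥ 1 and u ≥ 1. Then Σ_{t=0}^{u} (−1)^{u−t} · binom(1−lν, t) · binom(−lν−t, u−t) · binom(t·ν^{-1}, u) = binom(ν^{-1} − l, u). -/
theorem aux_prod_erase (f : ℕ → ℝ) (t d : ℕ) :
    ∏ j ∈ (Finset.range (t + d + 1)).erase t, f j =
      (∏ j ∈ Finset.range t, f j) * ∏ i ∈ Finset.range d, f (t + 1 + i) := by
  induction d with
  | zero =>
    have : (Finset.range (t + 0 + 1)).erase t = Finset.range t := by
      ext a; simp; omega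
    rw [this]; simp
  | succ d ih =>
    have : (Finset.range (t + (d + 1) + 1)).erase t =
        insert (t + 1 + d) ((Finset.range (t + d + 1)).erase t) := by
      ext a; simp; omega
    rw [this, Finset.prod_insert (by simp), ih, Finset.prod_range_succ]
    ring

theorem aux_fact1 (t : ℕ) : ∏ j ∈ Finset.range t, ((t : ℝ) - j) = t.factorial := by
  rw [← Finset.prod_range_reflect, ← Finset.prod_range_add_one_eq_factorial, Nat.cast_prod]
  refine Finset.prod_congr rfl fun j hj => ?_
  have hj := Finset.mem_range.1 hj
  rw [Nat.sub_sub, Nat.cast_sub (by omega)]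
  push_cast; ring

theorem aux_fact2 (t d : ℕ) :
    ∏ i ∈ Finset.range d, ((t : ℝ) - ((t + 1 + i : ℕ) : ℝ)) = (-1) ^ d * d.factorial := by
  rw [← Finset.prod_range_add_one_eq_factorial, Nat.cast_prod]
  have : (-1 : ℝ) ^ d = ∏ i ∈ Finset.range d, (-1 : ℝ) := by simp
  rw [this, ← Finset.prod_mul_distrib]
  refine Finset.prod_congr rfl fun j hj => ?_
  push_cast; ring

theorem aux_basis (x : ℝ) (t d : ℕ) :
    (-1 : ℝ) ^ d * gbinom x t * gbinom (x - 1 - t) d =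
      ∏ j ∈ (Finset.range (t + d + 1)).erase t, ((t : ℝ) - j)⁻¹ * (x - j) := by
  rw [Finset.prod_mul_distrib, Finset.prod_inv_distrib, aux_prod_erase, aux_prod_erase,
    aux_fact1, aux_fact2, gbinom, gbinom]
  have : ∏ i ∈ Finset.range d, (x - 1 - (t : ℝ) - (i : ℝ)) =
      ∏ i ∈ Finset.range d, (x - ((t + 1 + i : ℕ) : ℝ)) := by
    refine Finset.prod_congr rfl fun j hj => ?_
    push_cast; ring
  rw [this, mul_inv, mul_inv, ← inv_pow, inv_neg, inv_one]
  ring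

open Polynomial in
theorem aux_interp (P : ℝ[X]) (u : ℕ) (hP : P.degree < (u + 1 : ℕ)) (x : ℝ) :
    P.eval x = ∑ t ∈ Finset.range (u + 1), P.eval (t : ℝ) *
      ∏ j ∈ (Finset.range (u + 1)).erase t, ((t : ℝ) - j)⁻¹ * (x - j) := by
  have h := Lagrange.eq_interpolate (s := Finset.range (u + 1)) (v := fun n : ℕ => (n : ℝ))
    (f := P) (fun a _ b _ h => by simpa using h) (by simpa using hP)
  conv_lhs => rw [h]
  simp [Lagrange.interpolate_apply, eval_finsetSum, Lagrange.basis, Lagrange.basisDivisor,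
    eval_prod]

/-- for a nonzero real `ν` and integers `l, u ≥ 1`:
`Σ_{t=0}^{u} (−1)^{u−t} binom(1−lν,t) binom(−lν−t,u−t) binom(tν⁻¹,u) = binom(ν⁻¹−l, u)`. -/
theorem binom_alternating_identity (ν : ℝ) (hν : ν ≠ 0) (l u : ℕ) (hl : 1 ≤ l) (hu : 1 ≤ u) :
    ∑ t ∈ Finset.range (u + 1),
        (-1 : ℝ) ^ (u - t) * gbinom (1 - (l : ℝ) * ν) t *
          gbinom (-((l : ℝ) * ν) - t) (u - t) * gbinom ((t : ℝ) * ν⁻¹) u =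
      gbinom (ν⁻¹ - l) u := by
  open Polynomial in
  let P : ℝ[X] := C ((u.factorial : ℝ)⁻¹) * ∏ i ∈ Finset.range u, (C ν⁻¹ * X + C (-(i : ℝ)))
  have hev : ∀ y, P.eval y = gbinom (y * ν⁻¹) u := by
    intro y
    simp only [P, gbinom, Polynomial.eval_mul, Polynomial.eval_C, Polynomial.eval_prod,
      Polynomial.eval_add, Polynomial.eval_X]
    rw [div_eq_inv_mul]
    congr 1
    refine Finset.prod_congr rfl fun j hj => ?_
    ring
  have hdeg : P.degree < (u + 1 : ℕ) := by
    refine lt_of_le_of_lt (b := (u : WithBot ℕ)) ?_ (by exact_mod_cast Nat.lt_succ_self u)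
    rw [Polynomial.degree_C_mul (by positivity)]
    refine (Polynomial.degree_prod_le _ _).trans ?_
    refine (Finset.sum_le_sum fun i _ => Polynomial.degree_linear_le).trans ?_
    simp
  have h := aux_interp P u hdeg (1 - l * ν)
  have e : (1 - (l : ℝ) * ν) * ν⁻¹ = ν⁻¹ - l := by field_simp
  rw [hev, e] at h
  rw [h]
  refine Finset.sum_congr rfl fun t ht => ?_
  obtain ⟨d, rfl⟩ := Nat.exists_eq_add_of_le (Nat.lt_succ_iff.1 (Finset.mem_range.1 ht))
  rw [← aux_basis, hev, Nat.add_sub_cancel_left,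
    show -((l : ℝ) * ν) - t = 1 - (l : ℝ) * ν - 1 - t by ring]
  ring
end

section
/- Let K be a field of characteristic 0, L = K(α) the field of rational functions in one variable α over K, and let d : L → L be the unique K-derivation with d(α) = 1. Let r, s ∈ ℤ with s ≠ 0 and ν = r + s > 0, and set d_k = (Π_{i=0}^{k−1}(1 − iν))/s^k for k ≥ 1, d_0 = 1. Define δ_i : L → L for i ∈ ℤ_{≤0} by δ_{1−kν} = (d_k/k!)·d^k for integers k ≥ 1, and δ_i = 0 for all i ≤ 0 with i ≢ 1 (mod ν). Then the maps δ_i satisfy the Leibniz-type identity (★). -/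
noncomputable section

/-- The coefficient `d_k / k! = (∏_{i=0}^{k-1} (1 - iν)) / (s^k k!)` (with `ν = r + s`),
as an element of `K(α) = RatFunc K`. -/
def dCoeff (K : Type*) [Field K] (r s : ℤ) (k : ℕ) : RatFunc K :=
  (∏ i ∈ Finset.range k, (1 - (i : RatFunc K) * (((r + s : ℤ) : ℤ) : RatFunc K))) /
    (((s : ℤ) : RatFunc K) ^ k * (k.factorial : RatFunc K))

/-- The family `δ_i : L → L` (`L = K(α)`): `δ_{1-kν} = (d_k/k!)·d^k` for `k ≥ 1`
(`ν = r + s`), and `δ_i = 0` for `i ≢ 1 (mod ν)`. -/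
def deltaFamily (K : Type*) [Field K] (d : RatFunc K → RatFunc K) (r s : ℤ) :
    ℤ → RatFunc K → RatFunc K := fun i a =>
  if (r + s) ∣ (1 - i) ∧ 1 ≤ (1 - i) / (r + s) then
    dCoeff K r s ((1 - i) / (r + s)).toNat * (d^[((1 - i) / (r + s)).toNat] a)
  else 0

section helpers
open PowerSeries Finset

theorem zb_aux (n : ℤ) (k : ℕ) :
  zbinom n k = Ring.choose n k := by
  unfold zbinom
  split_ifs with h
  · obtain ⟨m, rfl⟩ := Int.eq_ofNat_of_zero_le h
    rw [Ring.choose_natCast]; simp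
  · obtain ⟨m, rfl⟩ : ∃ m : ℕ, n = -(m + 1 : ℤ) := ⟨(-n-1).toNat, by omega⟩
    rw [Ring.choose_neg]
    have : ((m:ℤ) + 1 + k - 1) = ((m + k : ℕ) : ℤ) := by push_cast; ring
    rw [this, Ring.choose_natCast]
    have h2 : ((k:ℤ) - 1 - -((m:ℤ)+1)).toNat = m + k := by omega
    have h3 : (((k : ℤ).negOnePow : ℤˣ) : ℤ) = (-1) ^ k := by
      exact Int.cast_negOnePow_natCast ℤ k
    rw [h2, Units.smul_def, h3]
    simp

theorem bs_subst {K : Type*} [Field K] [CharZero K] (x l : K) (F : PowerSeries K)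
    (hF : 1 + F = rescale l (binomialSeries K x)) (N : ℤ) :
    (binomialSeries K (N : K)).subst F = rescale l (binomialSeries K (N * x)) := by
  have hF0 : constantCoeff F = 0 := by
    have := congrArg constantCoeff hF
    rw [← coeff_zero_eq_constantCoeff_apply, ← coeff_zero_eq_constantCoeff_apply] at this
    simpa [coeff_rescale] using this
  have hS : HasSubst F := HasSubst.of_constantCoeff_zero' hF0
  have hone : (1 : PowerSeries K).subst F = (1 : PowerSeries K) := by
    rw [← coe_substAlgHom hS, map_one]
  have hnat : ∀ M : ℕ, (binomialSeries K (M : K)).subst F =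
      rescale l (binomialSeries K (M * x)) := by
    intro M
    rw [binomialSeries_nat, subst_pow hS, subst_add hS, hone, subst_X hS, hF]
    clear hF hS hone hF0
    induction M with
    | zero => simp
    | succ M ih => rw [pow_succ, ih, ← map_mul, ← binomialSeries_add]; congr 2; push_cast; ring
  obtain ⟨M, rfl | rfl⟩ := Int.eq_nat_or_neg N
  · simpa using hnat M
  · have h1 : (binomialSeries K (((-M : ℤ)) : K)).subst F * (binomialSeries K (M : K)).subst F
        = (1 : PowerSeries K) := by
      rw [← subst_mul hS, ← binomialSeries_add]; simp [hone]
    have h2 : rescale l (binomialSeries K (((-M : ℤ) : K) * x)) *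
        (binomialSeries K (M : K)).subst F = (1 : PowerSeries K) := by
      rw [hnat, ← map_mul, ← binomialSeries_add]; simp
    exact mul_right_cancel₀ (right_ne_zero_of_mul_eq_one h1) (h1.trans h2.symm)

theorem coeff_pow_eq_zero {K : Type*} [Field K] (F : PowerSeries K)
    (hF0 : constantCoeff F = 0) {p k : ℕ} (h : p < k) : coeff p (F ^ k) = 0 := by
  exact PowerSeries.coeff_of_lt_order _ (lt_of_lt_of_le (by exact_mod_cast h) (le_order_pow_of_constantCoeff_eq_zero k hF0))

theorem sum_choose_coeff {K : Type*} [Field K] [CharZero K] (x l : K) (F : PowerSeries K)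
    (hF0 : constantCoeff F = 0)
    (hF : 1 + F = rescale l (binomialSeries K x)) (N : ℤ) (p n : ℕ) (hp : 0 < p) (hpn : p ≤ n) :
    ∑ k ∈ Icc 1 n, ((Ring.choose N k : ℤ) : K) * coeff p (F ^ k) =
      l ^ p * Ring.choose (N * x) p := by
  have hS : HasSubst F := HasSubst.of_constantCoeff_zero' hF0
  have := congrArg (coeff p) (bs_subst x l F hF N)
  rw [coeff_subst' hS, coeff_rescale, binomialSeries_coeff] at this
  rw [finsum_eq_sum_of_support_subset (s := Icc 1 n)] at this
  · simp only [binomialSeries_coeff, smul_eq_mul, mul_one] at this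
    rw [← this]
    refine sum_congr rfl fun k _ => ?_
    congr 1
    exact Ring.map_choose (Int.castRingHom K) N k
  · intro k hk
    simp only [Function.mem_support] at hk
    simp only [coe_Icc, Set.mem_Icc]
    have h := right_ne_zero_of_smul hk
    constructor
    · by_contra h0
      obtain rfl : k = 0 := by omega
      apply h; simp [coeff_one]; omega
    · by_contra h0
      exact h (coeff_pow_eq_zero F hF0 (by omega))

theorem choose_prod {K : Type*} [Field K] [CharZero K] (v s : K) (hv : v ≠ 0) (hs : s ≠ 0) (k : ℕ) :
   (∏ i ∈ range k, (1 - (i:K) * v)) / (s ^ k * (k.factorial : K)) = (v / s) ^ k * Ring.choose (1/v) k := by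
  have h : ∀ k : ℕ, (descPochhammer ℤ k).smeval (1/v) = ∏ i ∈ range k, (1/v - (i : K)) := by
    intro k
    induction k with
    | zero => simp
    | succ k ih =>
      rw [descPochhammer_succ_right, Polynomial.smeval_mul, ih, prod_range_succ]
      simp [Polynomial.smeval_sub, Polynomial.smeval_natCast]
  rw [Ring.choose_eq_smul, h]
  have : ∀ i : ℕ, (1 - (i:K) * v) = v * (1 / v - i) := by intro i; field_simp
  simp_rw [this, prod_mul_distrib]
  simp [div_pow]
  field_simp

/-- The lists of natural numbers of length `k` and sum `p`. -/
def Wl : ℕ → ℕ → Finset (List ℕ)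
  | 0, p => if p = 0 then {[]} else ∅
  | k+1, p => (antidiagonal p).biUnion fun x => (Wl k x.2).image (fun l => x.1 :: l)

theorem mem_Wl (k p : ℕ) (l : List ℕ) : l ∈ Wl k p ↔ l.length = k ∧ l.sum = p := by
  induction k generalizing p l with
  | zero => 
    unfold Wl
    split_ifs with h
    · simp [h]; rintro rfl; rfl
    · simp; rintro rfl; simpa using Ne.symm h
  | succ k ih =>
    simp only [Wl, mem_biUnion, mem_image, ih, HasAntidiagonal.mem_antidiagonal]
    constructor
    · rintro ⟨x, hx, l, ⟨h1, h2⟩, rfl⟩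
      simp; omega
    · rintro ⟨h1, h2⟩
      cases l with
      | nil => simp at h1
      | cons y l => exact ⟨(y, l.sum), by simpa using h2, l, ⟨by simpa using h1, rfl⟩, rfl⟩

theorem coeff_pow_Wl {K : Type*} [Field K] (F : PowerSeries K) (k p : ℕ) :
    coeff p (F ^ k) = ∑ l ∈ Wl k p, (l.map fun j => coeff j F).prod := by
  induction k generalizing p with
  | zero =>
    unfold Wl
    rw [pow_zero, coeff_one]
    split_ifs <;> simp
  | succ k ih =>
    rw [pow_succ', coeff_mul, Wl, sum_biUnion]
    · refine sum_congr rfl fun x _ => ?_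
      rw [sum_image (by simp), ih, mul_sum]
      simp
    · intro x hx y hy hxy
      simp only [Function.onFun, disjoint_left, mem_image]
      rintro _ ⟨l, h1, rfl⟩ ⟨l', h2, h3⟩
      simp at h3 hx hy
      apply hxy
      ext <;> omega

theorem deriv_iter {K L : Type*} [Field K] [Field L] [Algebra K L] (d : Derivation K L L) (n : ℕ) (a b : L) :
   d^[n] (a * b) = ∑ ij ∈ antidiagonal n, n.choose ij.1 • (d^[ij.1] a * d^[ij.2] b) := by
  induction n with
  | zero => simp
  | succ n ih =>
    rw [sum_antidiagonal_choose_succ_nsmul (fun i j => d^[i] a * d^[j] b) n,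
      Function.iterate_succ_apply', ih, map_sum, ← sum_add_distrib]
    refine sum_congr rfl fun x hx => ?_
    rw [map_nsmul, d.leibniz, Function.iterate_succ_apply', Function.iterate_succ_apply', nsmul_add]
    have : n.choose x.2 = n.choose x.1 := by
      rw [HasAntidiagonal.mem_antidiagonal] at hx
      exact Nat.choose_symm_of_eq_add (by omega)
    simp only [this, smul_eq_mul, mul_comm (d^[x.2] b)]

theorem deriv_iter_smul {K L : Type*} [Field K] [Field L] [Algebra K L] (d : Derivation K L L) (n : ℕ) (c : K) (b : L) :
   d^[n] (c • b) = c • d^[n] b := by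
  induction n with
  | zero => simp
  | succ n ih => rw [Function.iterate_succ_apply', ih, Function.iterate_succ_apply', d.map_smul]

/-- Coefficients of `(1 + (v/s) t)^(1/v) - 1`. -/
def cK (K : Type*) [Field K] [CharZero K] (v s : K) (k : ℕ) : K :=
  if k = 0 then 0 else (v / s) ^ k * Ring.choose (1 / v) k

theorem delta_nat (K : Type*) [Field K] [CharZero K] (d : RatFunc K → RatFunc K)
    (r s : ℤ) (hs : s ≠ 0) (hν : 0 < r + s) (m : ℕ) (a : RatFunc K) :
    deltaFamily K d r s (1 - m * (r + s)) a = cK K ((r + s : ℤ) : K) (s : K) m • d^[m] a := by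
  unfold deltaFamily cK
  have h : (1 - (1 - (m : ℤ) * (r + s))) / (r + s) = m := by
    rw [sub_sub_cancel, Int.mul_ediv_cancel _ hν.ne']
  have h' : (r + s) ∣ (1 - (1 - (m : ℤ) * (r + s))) := by
    rw [sub_sub_cancel]; exact Dvd.intro_left _ rfl
  rw [h]
  by_cases hm : m = 0
  · subst hm; simp
  · rw [if_pos ⟨h', by omega⟩, if_neg hm, Int.toNat_natCast,
      ← choose_prod _ _ (by exact_mod_cast hν.ne') (by exact_mod_cast hs), Algebra.smul_def]
    congr 1
    simp [dCoeff]

theorem delta_ne (K : Type*) [Field K] (d : RatFunc K → RatFunc K)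
    (r s : ℤ) (i : ℤ) (a : RatFunc K) (h : deltaFamily K d r s i a ≠ 0) :
    ∃ m : ℕ, 1 ≤ m ∧ i = 1 - m * (r + s) := by
  unfold deltaFamily at h
  split_ifs at h with h1
  · refine ⟨((1 - i) / (r + s)).toNat, by omega, ?_⟩
    rw [Int.toNat_of_nonneg (by omega), Int.ediv_mul_cancel h1.1]; ring
  · exact absurd rfl h

theorem dcomp_map (K : Type*) [Field K] [CharZero K]
    (d : Derivation K (RatFunc K) (RatFunc K))
    (r s : ℤ) (hs : s ≠ 0) (hν : 0 < r + s) (l : List ℕ) (b : RatFunc K) :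
    dcomp (deltaFamily K d r s) (l.map fun m : ℕ => 1 - (m : ℤ) * (r + s)) b =
      (l.map (cK K ((r + s : ℤ) : K) (s : K))).prod • d^[l.sum] b := by
  induction l with
  | nil => simp [dcomp]
  | cons m l ih =>
    simp only [List.map_cons, dcomp, List.prod_cons, List.sum_cons]
    rw [ih, delta_nat K d r s hs hν, deriv_iter_smul, smul_smul, Function.iterate_add_apply]

theorem dcomp_ne (K : Type*) [Field K] [CharZero K]
    (d : Derivation K (RatFunc K) (RatFunc K))
    (r s : ℤ) (l : List ℤ) (b : RatFunc K)
    (h : dcomp (deltaFamily K d r s) l b ≠ 0) :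
    ∃ l' : List ℕ, (∀ j ∈ l', 1 ≤ j) ∧ l = l'.map fun m : ℕ => 1 - (m : ℤ) * (r + s) := by
  induction l with
  | nil => exact ⟨[], by simp, rfl⟩
  | cons j l ih =>
    simp only [dcomp] at h
    obtain ⟨m, hm, hj⟩ := delta_ne K d r s j _ h
    have h0 : dcomp (deltaFamily K d r s) l b ≠ 0 := by
      intro h0
      apply h
      rw [h0]
      unfold deltaFamily
      split_ifs
      · rw [iterate_map_zero, mul_zero]
      · rfl
    obtain ⟨l', hl', rfl⟩ := ih h0
    exact ⟨m :: l', by simpa using ⟨hm, hl'⟩, by simp [hj]⟩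

theorem sum_map_aux (v : ℤ) (l : List ℕ) :
    (l.map fun m : ℕ => 1 - (m : ℤ) * v).sum - (l.length : ℤ) = - ((l.sum : ℕ) : ℤ) * v := by
  induction l with
  | nil => simp
  | cons m l ih =>
    simp only [List.map_cons, List.sum_cons, List.length_cons]
    push_cast at ih ⊢
    linear_combination ih

theorem length_le_sum_aux (l : List ℕ) (h : ∀ j ∈ l, 1 ≤ j) : l.length ≤ l.sum := by
  induction l with
  | nil => simp
  | cons m l ih =>
    simp only [List.mem_cons, forall_eq_or_imp] at h
    have := ih h.2
    simp only [List.sum_cons, List.length_cons]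
    omega

theorem coef_identity (K : Type*) [Field K] [CharZero K] (v s : ℤ) (hv : v ≠ 0)
    (n m : ℕ) (hm : 0 < m) (hmn : m < n) :
    cK K v s m * ∑ k ∈ Icc 1 n, ((Ring.choose (1 - (m : ℤ) * v) k : ℤ) : K) *
      coeff (n - m) ((PowerSeries.mk (cK K v s)) ^ k) = n.choose m * cK K v s n := by
  have hv' : (v : K) ≠ 0 := by exact_mod_cast hv
  rw [sum_choose_coeff (1 / (v : K)) ((v : K) / s) (PowerSeries.mk (cK K v s)) (by
    simp [← coeff_zero_eq_constantCoeff_apply, cK]) (by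
    ext k
    rw [coeff_rescale, binomialSeries_coeff, map_add, coeff_mk, coeff_one, cK]
    by_cases hk : k = 0
    · simp [hk]
    · simp [hk]) _ _ _ (by omega) (by omega)]
  unfold cK
  rw [if_neg (by omega), if_neg (by omega)]
  have h1 : (((1 - (m : ℤ) * v : ℤ)) : K) * (1 / (v : K)) = 1 / (v : K) - m := by
    push_cast; field_simp
  rw [h1]
  have h2 := Ring.choose_smul_choose (1 / (v : K)) hmn.le
  rw [nsmul_eq_mul] at h2
  have h3 : ((v : K) / s) ^ n = ((v : K) / s) ^ m * ((v : K) / s) ^ (n - m) := by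
    rw [← pow_add]; congr 1; omega
  rw [h3]
  linear_combination (-((v : K) / s) ^ m * ((v : K) / s) ^ (n - m)) * h2

theorem main_aux (K : Type*) [Field K] [CharZero K]
    (d : Derivation K (RatFunc K) (RatFunc K))
    (r s : ℤ) (hs : s ≠ 0) (hν : 0 < r + s) :
    LeibnizStar (deltaFamily K (⇑d) r s) := by
  intro i hi a b
  by_cases hin : ∃ n : ℕ, 1 ≤ n ∧ i = 1 - n * (r + s)
  swap
  · have hz : ∀ x, deltaFamily K d r s i x = 0 := by
      intro x
      by_contra h
      exact hin (delta_ne K d r s i x h)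
    rw [hz, hz, hz, finsum_eq_zero_of_forall_eq_zero]
    · simp
    · rintro ⟨p, l⟩
      split_ifs with hc
      · by_contra hne
        obtain ⟨-, h2⟩ := smul_ne_zero_iff.1 hne
        obtain ⟨m, hm, hp⟩ := delta_ne K d r s p _ (left_ne_zero_of_mul h2)
        obtain ⟨l', hl', rfl⟩ := dcomp_ne K d r s l _ (right_ne_zero_of_mul h2)
        apply hin
        refine ⟨m + l'.sum, by omega, ?_⟩
        have h3 := hc.2.2.2
        simp only [List.length_map] at h3
        rw [sum_map_aux] at h3
        subst hp
        rw [← h3]; push_cast; ring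
      · rfl
  obtain ⟨n, hn, rfl⟩ := hin
  set v := r + s with hv
  set c := cK K (v : K) (s : K) with hc
  set e : (Σ _ : ℕ, Σ _ : ℕ, List ℕ) → ℤ × List ℤ :=
    fun x => (1 - (x.1 : ℤ) * v, x.2.2.map fun m : ℕ => 1 - (m : ℤ) * v) with he
  set S : Finset (Σ _ : ℕ, Σ _ : ℕ, List ℕ) :=
    (range (n + 1)).sigma fun m => (Icc 1 n).sigma fun k => Wl k (n - m) with hS
  have hS_mem : ∀ x, x ∈ S ↔ x.1 ≤ n ∧ (1 ≤ x.2.1 ∧ x.2.1 ≤ n) ∧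
      x.2.2.length = x.2.1 ∧ x.2.2.sum = n - x.1 := by
    intro x
    simp only [hS, mem_sigma, mem_range, mem_Icc, mem_Wl, Nat.lt_succ_iff]
  have hinj1 : Function.Injective (fun m : ℕ => 1 - (m : ℤ) * v) := by
    intro x y hxy
    have : (x : ℤ) * v = y * v := by simpa using hxy
    exact_mod_cast mul_right_cancel₀ hν.ne' this
  have hinj : Set.InjOn e S := by
    rintro ⟨m, k, l⟩ hx ⟨m', k', l'⟩ hy hxy
    have hx' := (hS_mem _).1 hx
    have hy' := (hS_mem _).1 hy
    simp only [he, Prod.mk.injEq] at hxy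
    have h1 : m = m' := hinj1 hxy.1
    have h2 : l = l' := (List.map_injective_iff.2 hinj1) hxy.2
    subst h1; subst h2
    have : k = k' := hx'.2.2.1.symm.trans hy'.2.2.1
    subst this; rfl
  rw [finsum_eq_sum_of_support_subset (s := S.image e)]
  swap
  · rintro ⟨p, l⟩ hp
    rw [Function.mem_support] at hp
    split_ifs at hp with hcnd
    · obtain ⟨-, h2⟩ := smul_ne_zero_iff.1 hp
      obtain ⟨m, hm, hpm⟩ := delta_ne K d r s p _ (left_ne_zero_of_mul h2)
      obtain ⟨l', hl', rfl⟩ := dcomp_ne K d r s l _ (right_ne_zero_of_mul h2)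
      have h3 := hcnd.2.2.2
      simp only [List.length_map] at h3
      rw [sum_map_aux] at h3
      rw [hpm] at h3
      have h4 : ((m + l'.sum : ℕ) : ℤ) * v = (n : ℤ) * v := by
        push_cast; push_cast at h3; linear_combination -h3
      have h5 : m + l'.sum = n := by exact_mod_cast mul_right_cancel₀ hν.ne' h4
      rw [coe_image]
      refine ⟨⟨m, l'.length, l'⟩, ?_, by simp [he, hpm, hv]⟩
      rw [mem_coe, hS_mem]
      have h6 := length_le_sum_aux l' hl'
      have h7 : l'.length ≠ 0 := by
        intro h0
        apply hcnd.2.1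
        simp [List.length_eq_zero_iff.1 h0]
      refine ⟨?_, ⟨?_, ?_⟩, rfl, ?_⟩ <;> simp only <;> omega
    · exact absurd rfl hp
  rw [sum_image hinj]
  have hterm : ∀ x ∈ S, (if (e x).1 ≤ 0 ∧ (e x).2 ≠ [] ∧ (∀ j ∈ (e x).2, j ≤ 0) ∧
            (e x).2.sum - ((e x).2.length : ℤ) + (e x).1 = 1 - (n : ℤ) * v
        then zbinom (e x).1 (e x).2.length • (deltaFamily K d r s (e x).1 a *
          dcomp (deltaFamily K d r s) (e x).2 b) else 0) =
      (c x.1 * (((Ring.choose (1 - (x.1 : ℤ) * v) x.2.1 : ℤ) : K) * (x.2.2.map c).prod)) •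
        (d^[x.1] a * d^[n - x.1] b) := by
    rintro ⟨m, k, l⟩ hx
    obtain ⟨h1, ⟨h2, h2'⟩, h3, h4⟩ := (hS_mem _).1 hx
    simp only at h1 h2 h2' h3 h4
    have hval : zbinom (1 - (m : ℤ) * v) k • (deltaFamily K d r s (1 - (m : ℤ) * v) a *
          dcomp (deltaFamily K d r s) (l.map fun m : ℕ => 1 - (m : ℤ) * v) b) =
        (c m * (((Ring.choose (1 - (m : ℤ) * v) k : ℤ) : K) * (l.map c).prod)) •
        (d^[m] a * d^[n - m] b) := by
      rw [delta_nat K d r s hs hν, dcomp_map K d r s hs hν, h4, zb_aux, ← Int.cast_smul_eq_zsmul K,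
        smul_mul_smul_comm, smul_smul]
      congr 1
      ring
    simp only [he, List.length_map, h3]
    rw [← hval]
    split_ifs with hcnd
    · rfl
    · by_contra hne
      obtain ⟨-, hne2⟩ := smul_ne_zero_iff.1 (Ne.symm hne)
      obtain ⟨m', hm', hp⟩ := delta_ne K d r s _ _ (left_ne_zero_of_mul hne2)
      obtain ⟨l', hl', hl⟩ := dcomp_ne K d r s _ _ (right_ne_zero_of_mul hne2)
      have hl2 : l = l' := (List.map_injective_iff.2 hinj1) hl
      have hm2 : m = m' := hinj1 hp
      subst hl2; subst hm2
      have hneg : ∀ m : ℕ, 1 ≤ m → 1 - (m : ℤ) * v ≤ 0 := by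
        intro m hm
        have : (1 : ℤ) ≤ m := by exact_mod_cast hm
        nlinarith
      apply hcnd
      refine ⟨hneg m hm', ?_, ?_, ?_⟩
      · intro h0
        rw [List.map_eq_nil_iff] at h0
        subst h0
        simp at h3; omega
      · intro j hj
        obtain ⟨y, hy, rfl⟩ := List.mem_map.1 hj
        exact hneg y (hl' y hy)
      · have := sum_map_aux v l
        rw [h3] at this
        rw [this, h4, Nat.cast_sub h1]; ring
  rw [sum_congr rfl hterm, hS, sum_sigma]
  have hinner : ∀ m ∈ range (n + 1),
      ∑ x ∈ (Icc 1 n).sigma (fun k => Wl k (n - m)),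
        (c m * (((Ring.choose (1 - (m : ℤ) * v) x.1 : ℤ) : K) * (x.2.map c).prod)) •
        (d^[m] a * d^[n - m] b) =
      (if m = 0 then 0 else if m = n then 0 else (n.choose m : K) * c n) •
        (d^[m] a * d^[n - m] b) := by
    intro m hm
    rw [mem_range] at hm
    rw [← sum_smul, ← mul_sum, sum_sigma]
    congr 1
    have hF : ∀ k, ∑ l ∈ Wl k (n - m), (l.map c).prod =
        coeff (n - m) ((PowerSeries.mk c) ^ k) := by
      intro k
      rw [coeff_pow_Wl]
      simp only [coeff_mk]
    simp only [← mul_sum, hF]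
    split_ifs with h0 h1
    · simp [hc, cK, h0]
    · rw [sum_eq_zero, mul_zero]
      intro k hk
      rw [mem_Icc] at hk
      rw [coeff_pow_eq_zero, mul_zero]
      · simp [← coeff_zero_eq_constantCoeff_apply, hc, cK]
      · omega
    · exact coef_identity K v s hν.ne' n m (by omega) (by omega)
  have hinner' := sum_congr rfl hinner
  simp only at hinner' ⊢
  rw [hinner', delta_nat K d r s hs hν, delta_nat K d r s hs hν, delta_nat K d r s hs hν, deriv_iter,
    Nat.sum_antidiagonal_eq_sum_range_succ_mk, ← hv, ← hc]
  obtain ⟨n', rfl⟩ : ∃ n', n = n' + 1 := ⟨n - 1, by omega⟩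
  rw [sum_range_succ, sum_range_succ', sum_range_succ (n := n' + 1), sum_range_succ' (n := n')]
  have hmid : ∀ m ∈ range n', (if m + 1 = 0 then 0 else if m + 1 = n' + 1 then 0 else
      ((n' + 1).choose (m + 1) : K) * c (n' + 1)) • (d^[m + 1] a * d^[n' + 1 - (m + 1)] b) =
      c (n' + 1) • ((n' + 1).choose (m + 1) • (d^[m + 1] a * d^[n' + 1 - (m + 1)] b)) := by
    intro m hm
    rw [mem_range] at hm
    rw [if_neg (by omega), if_neg (by omega), ← Nat.cast_smul_eq_nsmul K, smul_smul, mul_comm]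
  rw [sum_congr rfl hmid, ← smul_sum]
  simp only [smul_add]
  simp
  ring
end helpers

/-- for a field `K` of characteristic `0`, `L = K(α)`, the `K`-derivation `d`
of `L` with `d(α) = 1`, and `r, s ∈ ℤ` with `s ≠ 0` and `ν = r + s > 0`, the maps
`δ_{1-kν} = (d_k/k!)·d^k` (`k ≥ 1`), `δ_i = 0` otherwise, satisfy the Leibniz-type
identity (★). -/
theorem deltaFamily_leibnizStar (K : Type*) [Field K] [CharZero K]
    (d : Derivation K (RatFunc K) (RatFunc K)) (hd : d RatFunc.X = 1)
    (r s : ℤ) (hs : s ≠ 0) (hν : 0 < r + s) :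
    LeibnizStar (deltaFamily K (⇑d) r s) := by
  exact main_aux K d r s hs hν

end
end

section
/- Let K be a field of characteristic 0, L = K(α) the rational function field, d : L → L the unique K-derivation with d(α) = 1, and r, s ∈ ℤ with s ≠ 0 and ν = r + s > 0. Suppose · is a deformed Laurent series product on L((T^{-1})) satisfying T·f = fT + Σ_{k≥1} (d_k/k!)·d^k(f) · T^{1−kν} for all f ∈ L, where d_k = (Π_{i=0}^{k−1}(1 − iν))/s^k. Then: (a) for every n ∈ ℤ, T^n·α − α·T^n = (n/s)·T^{n−ν}; (b) T^s·(α T^r) − (α T^r)·T^s = 1; (c) consequently there exists an injective K-algebra homomorphism η from the Weyl algebra A_1(K) to the division ring (L((T^{-1})), ·) with η(q) = T^s and η(p) = α T^r. -/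
noncomputable section

/-- The defining relation of the Weyl algebra: `q p = p q + 1`
(with `false` playing the role of `p` and `true` that of `q`). -/
inductive WeylRel (K : Type*) [Field K] : FreeAlgebra K Bool → FreeAlgebra K Bool → Prop
  | rel : WeylRel K (FreeAlgebra.ι K true * FreeAlgebra.ι K false)
      (FreeAlgebra.ι K false * FreeAlgebra.ι K true + 1)

/-- The Weyl algebra `A₁(K)`: the quotient of the free associative unital `K`-algebra on two
generators `p`, `q` by the two-sided ideal generated by `q p - p q - 1`. -/
def Weyl (K : Type*) [Field K] := RingQuot (WeylRel K)

instance (K : Type*) [Field K] : Ring (Weyl K) :=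
  inferInstanceAs (Ring (RingQuot (WeylRel K)))

instance (K : Type*) [Field K] : Algebra K (Weyl K) :=
  inferInstanceAs (Algebra K (RingQuot (WeylRel K)))

/-- The generator `p` of the Weyl algebra. -/
def Wp (K : Type*) [Field K] : Weyl K :=
  RingQuot.mkAlgHom K (WeylRel K) (FreeAlgebra.ι K false)

/-- The generator `q` of the Weyl algebra. -/
def Wq (K : Type*) [Field K] : Weyl K :=
  RingQuot.mkAlgHom K (WeylRel K) (FreeAlgebra.ι K true)

/-- A degree map on a ring `R`: a function `u : R → ℝ ∪ {-∞}` with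
`u(fg) = u(f) + u(g)`, `u(f+g) ≤ max (u f) (u g)`, and `u f = -∞ ↔ f = 0`. -/
structure IsDegreeMap {R : Type*} [Ring R] (u : R → WithBot ℝ) : Prop where
  map_mul : ∀ f g, u (f * g) = u f + u g
  add_le : ∀ f g, u (f + g) ≤ max (u f) (u g)
  bot_iff : ∀ f, u f = ⊥ ↔ f = 0

end

noncomputable section

open InvLaurent

section WeylHelpers

open InvLaurent

/-- The carrier `L((T⁻¹))` regarded as a ring through the deformed product `μ`. -/
def DPRing {L : Type*} [Field L] (_μ : DeformedProduct L) := InvLaurent L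

namespace DPRing

variable {L : Type*} [Field L]

theorem T_ne_zero (n : ℤ) : T L n ≠ 0 := by
  intro h
  have := congrArg (fun f => InvLaurent.coeff f n) h
  simp [T, single] at this

theorem lsmul_one' (f : InvLaurent L) : lsmul (1 : L) f = f := by
  ext i; simp [lsmul]

theorem mul_T_zero (μ : DeformedProduct L) (f : InvLaurent L) : μ.mul f (T L 0) = f := by
  have h1 : μ.mul (μ.mul f (T L 0) + -f) (T L 0) = 0 := by
    have hneg : μ.mul (-f) (T L 0) = -μ.mul f (T L 0) := by
      rw [eq_neg_iff_add_eq_zero, ← μ.right_distrib, neg_add_cancel]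
      have := μ.right_distrib 0 0 (T L 0)
      simpa using this
    rw [μ.right_distrib, μ.mul_assoc, μ.T_mul_T, hneg]
    simp
  have h2 := μ.deg_mul (μ.mul f (T L 0) + -f) (T L 0)
  rw [h1, (deg_eq_bot_iff (0 : InvLaurent L)).mpr rfl] at h2
  have h3 := WithBot.add_eq_bot.mp h2.symm
  rcases h3 with h3 | h3
  · rw [deg_eq_bot_iff] at h3
    exact add_neg_eq_zero.mp h3
  · rw [deg_eq_bot_iff] at h3
    exact absurd h3 (T_ne_zero 0)

theorem zero_mul' (μ : DeformedProduct L) (f : InvLaurent L) : μ.mul 0 f = 0 := by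
  have := μ.right_distrib 0 0 f
  rw [add_zero] at this
  exact left_eq_add.mp this

theorem mul_zero' (μ : DeformedProduct L) (f : InvLaurent L) : μ.mul f 0 = 0 := by
  have := μ.left_distrib f 0 0
  rw [add_zero] at this
  exact left_eq_add.mp this

instance (μ : DeformedProduct L) : Ring (DPRing μ) :=
  { (inferInstance : AddCommGroup (InvLaurent L)) with
    mul := μ.mul
    one := T L 0
    mul_assoc := μ.mul_assoc
    left_distrib := μ.left_distrib
    right_distrib := μ.right_distrib
    one_mul := fun f => (μ.lsmul_eq 1 f).trans (lsmul_one' f)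
    mul_one := mul_T_zero μ
    zero_mul := zero_mul' μ
    mul_zero := mul_zero' μ }

variable (μ : DeformedProduct L)

/-- monomials as elements of the ring -/
def sg (n : ℤ) (a : L) : DPRing μ := single n a

/-- powers of `T` as elements of the ring -/
def t (n : ℤ) : DPRing μ := T L n

/-- coefficients -/
def co (f : DPRing μ) (i : ℤ) : L := InvLaurent.coeff f i

/-- degree -/
def dg (f : DPRing μ) : WithBot ℤ := InvLaurent.deg f

theorem co_ext {f g : DPRing μ} (h : ∀ i, co μ f i = co μ g i) : f = g := InvLaurent.ext h

theorem co_add (f g : DPRing μ) (i : ℤ) : co μ (f + g) i = co μ f i + co μ g i := rfl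
theorem co_sub (f g : DPRing μ) (i : ℤ) : co μ (f - g) i = co μ f i - co μ g i :=
  InvLaurent.coeff_sub _ _ _
theorem co_zero (i : ℤ) : co μ 0 i = 0 := rfl
theorem co_sg (n : ℤ) (a : L) (i : ℤ) : co μ (sg μ n a) i = if i = n then a else 0 := rfl
theorem co_sg_mul (a : L) (f : DPRing μ) (i : ℤ) : co μ (sg μ 0 a * f) i = a * co μ f i :=
  congrArg (fun g => InvLaurent.coeff g i) (μ.lsmul_eq a f)
theorem t_eq (n : ℤ) : t μ n = sg μ n 1 := rfl
theorem one_eq : (1 : DPRing μ) = sg μ 0 1 := rfl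
theorem t_zero : t μ 0 = 1 := rfl
theorem t_mul (i j : ℤ) : t μ i * t μ j = t μ (i + j) := μ.T_mul_T i j
theorem sg_eq (n : ℤ) (a : L) : sg μ n a = sg μ 0 a * t μ n := by
  apply co_ext; intro i
  rw [co_sg_mul, t_eq, co_sg, co_sg]; split <;> simp
theorem sg_mul_sg (a b : L) (n : ℤ) : sg μ 0 a * sg μ n b = sg μ n (a * b) := by
  apply co_ext; intro i
  rw [co_sg_mul, co_sg, co_sg]; split <;> simp
theorem sg_add (n : ℤ) (a b : L) : sg μ n a + sg μ n b = sg μ n (a + b) := by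
  apply co_ext; intro i
  rw [co_add, co_sg, co_sg, co_sg]; split <;> simp
theorem sg_zero (n : ℤ) : sg μ n 0 = 0 := by
  apply co_ext; intro i
  rw [co_sg, co_zero]; split <;> simp
theorem sg_mul_t (n m : ℤ) (a : L) : sg μ n a * t μ m = sg μ (n + m) a := by
  rw [sg_eq, mul_assoc, t_mul, ← sg_eq]

theorem dg_mul (f g : DPRing μ) : dg μ (f * g) = dg μ f + dg μ g := μ.deg_mul f g
theorem dg_add_le (f g : DPRing μ) : dg μ (f + g) ≤ max (dg μ f) (dg μ g) := deg_add_le _ _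
theorem co_eq_zero {f : DPRing μ} {i : ℤ} (h : dg μ f < i) : co μ f i = 0 := by
  by_contra hc
  exact absurd (le_deg (f := f) hc) (not_le.mpr h)
theorem dg_sg_le (n : ℤ) (a : L) : dg μ (sg μ n a) ≤ n := by
  unfold dg deg
  split
  · exact bot_le
  · rename_i h
    have := support_nonempty h
    refine WithBot.coe_le_coe.mpr (csSup_le this ?_)
    intro b hb
    by_contra hc
    apply hb
    exact (co_sg μ n a b).trans (if_neg (by omega))

/-- commutation with `T` implies commutation with all `T^n` -/
theorem commute_t {f : DPRing μ} (h : f * t μ 1 = t μ 1 * f) (n : ℤ) :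
    Commute f (t μ n) := by
  let u : (DPRing μ)ˣ := ⟨t μ 1, t μ (-1), by rw [t_mul]; rfl, by rw [t_mul]; rfl⟩
  have hu : ∀ n : ℤ, ((u ^ n : (DPRing μ)ˣ) : DPRing μ) = t μ n := by
    intro n
    induction n using Int.induction_on with
    | zero => simp [t_zero]
    | succ i ih => rw [zpow_add_one, Units.val_mul, ih]; exact t_mul μ _ _
    | pred i ih => rw [zpow_sub_one, Units.val_mul, ih]; exact t_mul μ _ _
  rw [← hu n]
  exact Commute.units_zpow_right (show Commute f (u : DPRing μ) from h) n

end DPRing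

open DPRing

section Main

theorem comm_const {K : Type*} [Field K] [CharZero K]
    (d : Derivation K (RatFunc K) (RatFunc K))
    (r s : ℤ) (hν : 0 < r + s)
    (μ : DeformedProduct (RatFunc K)) (hμ : HasDelta μ (deltaFamily K (⇑d) r s)) (c : K) (n : ℤ) :
    Commute (sg μ 0 (algebraMap K (RatFunc K) c)) (t μ n) := by
  apply commute_t
  apply co_ext
  intro i
  have h2 : co μ (t μ 1 * sg μ 0 (algebraMap K (RatFunc K) c)) i = _ := hμ _ i
  rw [h2, ← sg_eq, co_sg]
  have : deltaFamily K (⇑d) r s i (algebraMap K (RatFunc K) c) = 0 := by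
    unfold deltaFamily
    split
    · rename_i h
      obtain ⟨k, hk⟩ : ∃ k, ((1 - i) / (r + s)).toNat = k + 1 :=
        ⟨((1 - i) / (r + s)).toNat - 1, by omega⟩
      rw [hk, Function.iterate_succ_apply, d.map_algebraMap]
      have : ∀ k, (d^[k]) 0 = 0 := fun k => Function.iterate_fixed (map_zero d) k
      rw [this, mul_zero]
    · rfl
  rw [this]
  split <;> simp

theorem t_mul_X {K : Type*} [Field K] [CharZero K]
    (d : Derivation K (RatFunc K) (RatFunc K)) (hd : d RatFunc.X = 1)
    (r s : ℤ) (hν : 0 < r + s)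
    (μ : DeformedProduct (RatFunc K)) (hμ : HasDelta μ (deltaFamily K (⇑d) r s)) :
    t μ 1 * sg μ 0 RatFunc.X - sg μ 0 RatFunc.X * t μ 1 =
      sg μ (1 - (r + s)) (1 / (s : RatFunc K)) := by
  rw [sub_eq_iff_eq_add, ← sg_eq]
  apply co_ext
  intro i
  have h2 : co μ (t μ 1 * sg μ 0 RatFunc.X) i = _ := hμ _ i
  rw [h2, co_add, co_sg, co_sg]
  by_cases h1 : i = 1
  · rw [if_pos h1, if_pos h1, if_neg (by omega), zero_add]
  rw [if_neg h1, if_neg h1, add_zero]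
  by_cases h0 : i ≤ 0
  swap
  · rw [if_neg h0, if_neg (by omega)]
  rw [if_pos h0]
  unfold deltaFamily
  split
  · rename_i h
    obtain ⟨⟨k, hk⟩, hk1⟩ := h
    rw [hk, Int.mul_ediv_cancel_left _ hν.ne'] at hk1 ⊢
    by_cases hk2 : k = 1
    · subst hk2
      rw [if_pos (by omega)]
      simp [dCoeff, hd]
    · rw [if_neg]
      · obtain ⟨j, hj⟩ : ∃ j, k.toNat = j + 2 := ⟨k.toNat - 2, by omega⟩
        rw [hj, Function.iterate_add_apply]
        have : (d^[2]) RatFunc.X = 0 := by simp [hd]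
        rw [this]
        have : ∀ k, (d^[k]) 0 = 0 := fun k => Function.iterate_fixed (map_zero d) k
        rw [this, mul_zero]
      · intro hi
        apply hk2
        have : (r + s) * k = (r + s) * 1 := by rw [← hk]; omega
        exact mul_left_cancel₀ hν.ne' this
  · rename_i h
    rw [if_neg]
    intro hi
    apply h
    have : 1 - i = r + s := by omega
    rw [this, Int.ediv_self hν.ne']
    simp

theorem comm_rat {K : Type*} [Field K] [CharZero K]
    (d : Derivation K (RatFunc K) (RatFunc K))
    (r s : ℤ) (hν : 0 < r + s)
    (μ : DeformedProduct (RatFunc K)) (hμ : HasDelta μ (deltaFamily K (⇑d) r s)) (m n : ℤ) :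
    Commute (sg μ 0 ((m : RatFunc K) / (s : RatFunc K))) (t μ n) := by
  have := comm_const d r s hν μ hμ ((m : K) / s) n
  simpa using this

theorem part_a {K : Type*} [Field K] [CharZero K]
    (d : Derivation K (RatFunc K) (RatFunc K)) (hd : d RatFunc.X = 1)
    (r s : ℤ) (hν : 0 < r + s)
    (μ : DeformedProduct (RatFunc K)) (hμ : HasDelta μ (deltaFamily K (⇑d) r s)) (n : ℤ) :
    t μ n * sg μ 0 RatFunc.X - sg μ 0 RatFunc.X * t μ n =
      sg μ (n - (r + s)) ((n : RatFunc K) / (s : RatFunc K)) := by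
  have h1 := t_mul_X d hd r s hν μ hμ
  have key : ∀ n : ℤ, t μ (n+1) * sg μ 0 RatFunc.X - sg μ 0 RatFunc.X * t μ (n+1) =
      (t μ n * sg μ 0 RatFunc.X - sg μ 0 RatFunc.X * t μ n) * t μ 1 +
        sg μ (n + 1 - (r + s)) (1 / (s : RatFunc K)) := by
    intro n
    have h3 : sg μ (n + 1 - (r + s)) (1 / (s : RatFunc K)) =
        t μ n * sg μ (1 - (r + s)) (1 / (s : RatFunc K)) := by
      have := comm_rat d r s hν μ hμ 1 n
      rw [Int.cast_one] at this
      rw [sg_eq, sg_eq μ (1 - (r + s)), ← mul_assoc, ← this.eq, mul_assoc, t_mul]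
      congr 2; ring
    rw [h3, ← h1, ← t_mul]
    noncomm_ring
  induction n using Int.induction_on with
  | zero => simp [t_zero, sg_zero]
  | succ i ih =>
    rw [key, ih, sg_mul_t]
    have : (i : ℤ) - (r + s) + 1 = i + 1 - (r + s) := by ring
    rw [this, sg_add]
    congr 1
    push_cast; ring
  | pred i ih =>
    have h := key (-(i:ℤ) - 1)
    rw [sub_add_cancel, ih] at h
    have h4 := congrArg (· * t μ (-1)) (sub_eq_iff_eq_add.mpr h)
    simp only [mul_assoc, t_mul] at h4
    have h5 : t μ (1 + -1) = 1 := rfl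
    rw [h5, mul_one] at h4
    rw [← h4, sub_mul, sg_mul_t, sg_mul_t, sub_eq_iff_eq_add]
    have : -(i : ℤ) - (r + s) + -1 = -(i:ℤ) - 1 - (r + s) := by ring
    rw [this, sg_add]
    congr 1
    push_cast; ring

theorem part_b0 {K : Type*} [Field K] [CharZero K]
    (d : Derivation K (RatFunc K) (RatFunc K)) (hd : d RatFunc.X = 1)
    (r s : ℤ) (hν : 0 < r + s)
    (μ : DeformedProduct (RatFunc K)) (hμ : HasDelta μ (deltaFamily K (⇑d) r s)) : t μ s * sg μ r RatFunc.X - sg μ r RatFunc.X * t μ s =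
    sg μ 0 ((s : RatFunc K) / (s : RatFunc K)) := by
  have h := congrArg (· * t μ r) (part_a d hd r s hν μ hμ s)
  simp only [sub_mul, mul_assoc, t_mul] at h
  rw [← sg_eq, ← sg_eq, sg_mul_t] at h
  rw [sg_mul_t, add_comm r s, h]
  congr 1; ring

theorem part_b {K : Type*} [Field K] [CharZero K]
    (d : Derivation K (RatFunc K) (RatFunc K)) (hd : d RatFunc.X = 1)
    (r s : ℤ) (hs : s ≠ 0) (hν : 0 < r + s)
    (μ : DeformedProduct (RatFunc K)) (hμ : HasDelta μ (deltaFamily K (⇑d) r s)) : t μ s * sg μ r RatFunc.X - sg μ r RatFunc.X * t μ s = 1 := by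
  rw [part_b0 d hd r s hν μ hμ, div_self, one_eq]
  haveI : CharZero (RatFunc K) := charZero_of_injective_algebraMap
    (algebraMap K (RatFunc K)).injective
  exact_mod_cast hs

theorem lead_pow {K : Type*} [Field K] [CharZero K]
    (d : Derivation K (RatFunc K) (RatFunc K)) (hd : d RatFunc.X = 1)
    (r s : ℤ) (hν : 0 < r + s)
    (μ : DeformedProduct (RatFunc K)) (hμ : HasDelta μ (deltaFamily K (⇑d) r s)) (i : ℕ) :
    dg μ (sg μ r RatFunc.X ^ i - sg μ (r * i) (RatFunc.X ^ i)) < ((r * i : ℤ) : WithBot ℤ) := by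
  induction i with
  | zero =>
    have : sg μ r RatFunc.X ^ 0 - sg μ (r * (0:ℕ)) (RatFunc.X ^ 0) = 0 := by
      rw [pow_zero, pow_zero, one_eq]; simp
    rw [this]
    have h0 : dg μ 0 = ⊥ := (deg_eq_bot_iff (0 : InvLaurent (RatFunc K))).mpr rfl
    rw [h0]; exact WithBot.bot_lt_coe _
  | succ i ih =>
    have h : sg μ r RatFunc.X ^ (i+1) - sg μ (r * (i+1:ℕ)) (RatFunc.X ^ (i+1)) =
      (sg μ r RatFunc.X ^ i - sg μ (r * i) (RatFunc.X ^ i)) * sg μ r RatFunc.X +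
      sg μ (r * i - (r + s) + r) (RatFunc.X ^ i * (((r * i : ℤ) : RatFunc K) / (s : RatFunc K))) := by
      have ha := congrArg (fun z => sg μ 0 (RatFunc.X ^ i) * z * t μ r)
        (part_a d hd r s hν μ hμ (r * i))
      simp only [sg_mul_sg, sg_mul_t] at ha
      rw [← ha, pow_succ, sub_mul, sg_eq μ (r * i), sg_eq μ (r * (i+1:ℕ)), pow_succ,
        ← sg_mul_sg]
      have : r * ((i+1:ℕ):ℤ) = r * i + r := by push_cast; ring
      rw [zero_add, sg_eq μ (r * i), this, ← t_mul, sg_eq μ r]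
      noncomm_ring
    rw [h]
    refine lt_of_le_of_lt (dg_add_le μ _ _) (max_lt ?_ ?_)
    · rw [dg_mul]
      have h2 := dg_sg_le μ r (RatFunc.X : RatFunc K)
      calc _ ≤ dg μ (sg μ r RatFunc.X ^ i - sg μ (r * i) (RatFunc.X ^ i)) + (r : WithBot ℤ) := by
            gcongr
        _ < ((r * i : ℤ) : WithBot ℤ) + (r : WithBot ℤ) :=
            WithBot.add_lt_add_right (WithBot.coe_ne_bot) ih
        _ = _ := by rw [← WithBot.coe_add]; congr 1; push_cast; ring
    · refine lt_of_le_of_lt (dg_sg_le μ _ _) (WithBot.coe_lt_coe.mpr ?_)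
      push_cast; linarith

theorem co_mono {K : Type*} [Field K] [CharZero K]
    (d : Derivation K (RatFunc K) (RatFunc K)) (hd : d RatFunc.X = 1)
    (r s : ℤ) (hν : 0 < r + s)
    (μ : DeformedProduct (RatFunc K)) (hμ : HasDelta μ (deltaFamily K (⇑d) r s)) (i j : ℕ) (m : ℤ) (hm : r * i + s * j ≤ m) :
    co μ (sg μ r RatFunc.X ^ i * t μ s ^ j) m =
      if m = r * i + s * j then RatFunc.X ^ i else 0 := by
  have ht : t μ s ^ j = t μ (s * j) := by
    induction j generalizing m with
    | zero => simp [t_zero]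
    | succ j ih => rw [pow_succ, ih _ le_rfl, t_mul]; congr 1; push_cast; ring
  have h : sg μ r RatFunc.X ^ i * t μ s ^ j =
      (sg μ r RatFunc.X ^ i - sg μ (r * i) (RatFunc.X ^ i)) * t μ (s * j) +
        sg μ (r * i + s * j) (RatFunc.X ^ i) := by
    rw [sub_mul, sg_mul_t, ht, sub_add_cancel]
  rw [h, co_add, co_sg, co_eq_zero, zero_add]
  rw [dg_mul]
  have h2 := dg_sg_le μ (s * j) (1 : RatFunc K)
  calc _ ≤ dg μ (sg μ r RatFunc.X ^ i - sg μ (r * i) (RatFunc.X ^ i)) +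
          ((s * j : ℤ) : WithBot ℤ) := by
        gcongr; exact h2
    _ < ((r * i : ℤ) : WithBot ℤ) + ((s * j : ℤ) : WithBot ℤ) :=
        WithBot.add_lt_add_right (WithBot.coe_ne_bot) (lead_pow d hd r s hν μ hμ i)
    _ ≤ _ := by rw [← WithBot.coe_add]; exact WithBot.coe_le_coe.mpr hm

end Main

section WeylSpan

variable (K : Type*) [Field K]

theorem weyl_rel : Wq K * Wp K = Wp K * Wq K + 1 := by
  have h := RingQuot.mkAlgHom_rel K (WeylRel.rel (K := K))
  rw [map_add, map_mul, map_mul, map_one] at h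
  exact h

theorem weyl_q_pow (i : ℕ) : Wq K * Wp K ^ i = Wp K ^ i * Wq K + (i : Weyl K) * Wp K ^ (i - 1) := by
  induction i with
  | zero => simp
  | succ i ih =>
    rw [pow_succ, ← mul_assoc, ih, add_mul, mul_assoc, weyl_rel]
    rcases i with _ | i
    · simp
    · simp only [Nat.add_sub_cancel, Nat.cast_add, Nat.cast_one, pow_succ]
      noncomm_ring

/-- The monomials `p^i q^j`. -/
def wmono (x : ℕ × ℕ) : Weyl K := Wp K ^ x.1 * Wq K ^ x.2

/-- The quotient map. -/
def wmk : FreeAlgebra K Bool →ₐ[K] Weyl K := RingQuot.mkAlgHom K (WeylRel K)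

theorem weyl_span (z : Weyl K) : z ∈ Submodule.span K (Set.range (wmono K)) := by
  have hp : ∀ m ∈ Submodule.span K (Set.range (wmono K)),
      Wp K * m ∈ Submodule.span K (Set.range (wmono K)) := by
    intro m hm
    induction hm using Submodule.span_induction with
    | mem x hx =>
      obtain ⟨⟨i, j⟩, rfl⟩ := hx
      refine Submodule.subset_span ⟨(i + 1, j), ?_⟩
      simp only [wmono]
      rw [pow_succ', mul_assoc]
    | zero => simp
    | add x y _ _ hx hy => rw [mul_add]; exact add_mem hx hy
    | smul a x _ hx => rw [mul_smul_comm]; exact Submodule.smul_mem _ _ hx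
  have hq : ∀ m ∈ Submodule.span K (Set.range (wmono K)),
      Wq K * m ∈ Submodule.span K (Set.range (wmono K)) := by
    intro m hm
    induction hm using Submodule.span_induction with
    | mem x hx =>
      obtain ⟨⟨i, j⟩, rfl⟩ := hx
      simp only [wmono]
      rw [← mul_assoc, weyl_q_pow, add_mul, mul_assoc, ← pow_succ', mul_assoc]
      refine add_mem (Submodule.subset_span ⟨(i, j + 1), rfl⟩) ?_
      rw [← nsmul_eq_mul]
      exact nsmul_mem (Submodule.subset_span ⟨(i - 1, j), rfl⟩ : _ ∈ Submodule.span K (Set.range (wmono K))) i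
    | zero => simp
    | add x y _ _ hx hy => rw [mul_add]; exact add_mem hx hy
    | smul a x _ hx => rw [mul_smul_comm]; exact Submodule.smul_mem _ _ hx
  have hall : ∀ w : FreeAlgebra K Bool, ∀ m ∈ Submodule.span K (Set.range (wmono K)),
      wmk K w * m ∈
        Submodule.span K (Set.range (wmono K)) := by
    intro w
    induction w using FreeAlgebra.induction with
    | grade0 c =>
      intro m hm
      have : (wmk K (algebraMap K _ c) : Weyl K) =
        algebraMap K (Weyl K) c := AlgHom.commutes _ _
      rw [this, ← Algebra.smul_def]
      exact Submodule.smul_mem _ _ hm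
    | grade1 b =>
      cases b
      · exact hp
      · exact hq
    | mul a b ha hb =>
      intro m hm
      have : (wmk K (a * b) : Weyl K) =
        (wmk K a : Weyl K) * (wmk K b : Weyl K)
        := map_mul _ _ _
      rw [this, mul_assoc]
      exact ha _ (hb _ hm)
    | add a b ha hb =>
      intro m hm
      have : (wmk K (a + b) : Weyl K) =
        (wmk K a : Weyl K) + (wmk K b : Weyl K)
        := map_add _ _ _
      rw [this, add_mul]
      exact add_mem (ha _ hm) (hb _ hm)
  obtain ⟨w, rfl⟩ := RingQuot.mkAlgHom_surjective K (WeylRel K) z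
  have h1 := hall w 1 (Submodule.subset_span ⟨(0, 0), by simp [wmono]⟩)
  rwa [mul_one] at h1

end WeylSpan

section Eta

variable {K : Type*} [Field K] (μ : DeformedProduct (RatFunc K))

/-- The constants inside the deformed ring. -/
def constHom : K →+* DPRing μ where
  toFun c := sg μ 0 (algebraMap K (RatFunc K) c)
  map_one' := by rw [map_one]; rfl
  map_mul' a b := by rw [map_mul, sg_mul_sg]
  map_zero' := by rw [map_zero, sg_zero]
  map_add' a b := by rw [map_add, sg_add]

/-- The centralizer of the constants. -/
def constCent : Subring (DPRing μ) := Subring.centralizer (Set.range (constHom μ))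

theorem mem_constCent (f : DPRing μ) :
    f ∈ constCent μ ↔ ∀ c : K, constHom μ c * f = f * constHom μ c := by
  unfold constCent
  rw [Subring.mem_centralizer_iff]
  simp

theorem constHom_mem (c : K) : constHom μ c ∈ constCent μ := by
  rw [mem_constCent]
  intro b
  rw [← map_mul, mul_comm, map_mul]

instance : Algebra K (constCent μ) :=
  RingHom.toAlgebra' ((constHom μ).codRestrict (constCent μ) (constHom_mem μ))
    (fun c x => Subtype.ext ((mem_constCent μ x.1).mp x.2 c))

theorem exists_eta (P Q : constCent μ) (h : Q * P = P * Q + 1) :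
    ∃ η : Weyl K →ₐ[K] constCent μ, η (Wp K) = P ∧ η (Wq K) = Q := by
  let f : FreeAlgebra K Bool →ₐ[K] constCent μ := FreeAlgebra.lift K (fun b => if b then Q else P)
  have hf : ∀ ⦃x y⦄, WeylRel K x y → f x = f y := by
    intro x y hxy
    cases hxy
    simp [f, h]
  refine ⟨RingQuot.liftAlgHom K ⟨f, hf⟩, ?_, ?_⟩
  · exact (RingQuot.liftAlgHom_mkAlgHom_apply K f hf _).trans (by simp [f])
  · exact (RingQuot.liftAlgHom_mkAlgHom_apply K f hf _).trans (by simp [f])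

end Eta

end WeylHelpers

open DPRing

/-- with `K` of characteristic `0`, `L = K(α)`, `d` the `K`-derivation with
`d(α) = 1`, `r, s ∈ ℤ`, `s ≠ 0`, `ν = r + s > 0`, and `·` a deformed Laurent series product
on `L((T⁻¹))` with `T·f = fT + Σ_{k≥1} (d_k/k!) d^k(f) T^{1-kν}`:
(a) `T^n·α − α·T^n = (n/s)·T^{n−ν}` for every `n ∈ ℤ`;
(b) `T^s·(αT^r) − (αT^r)·T^s = 1`;
(c) there is an injective `K`-algebra homomorphism `η : A₁(K) → L((T⁻¹))` with
    `η(q) = T^s` and `η(p) = αT^r`. -/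
theorem embedding_of_weyl (K : Type*) [Field K] [CharZero K]
    (d : Derivation K (RatFunc K) (RatFunc K)) (hd : d RatFunc.X = 1)
    (r s : ℤ) (hs : s ≠ 0) (hν : 0 < r + s)
    (μ : DeformedProduct (RatFunc K)) (hμ : HasDelta μ (deltaFamily K (⇑d) r s)) :
    (∀ n : ℤ,
      μ.mul (T (RatFunc K) n) (single 0 RatFunc.X) -
          μ.mul (single 0 RatFunc.X) (T (RatFunc K) n) =
        single (n - (r + s)) (((n : ℤ) : RatFunc K) / ((s : ℤ) : RatFunc K))) ∧
    (μ.mul (T (RatFunc K) s) (single r RatFunc.X) -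
        μ.mul (single r RatFunc.X) (T (RatFunc K) s) = T (RatFunc K) 0) ∧
    (∃ η : Weyl K → InvLaurent (RatFunc K),
      Function.Injective η ∧
      η (Wq K) = T (RatFunc K) s ∧
      η (Wp K) = single r RatFunc.X ∧
      (∀ z w : Weyl K, η (z + w) = η z + η w) ∧
      (∀ z w : Weyl K, η (z * w) = μ.mul (η z) (η w)) ∧
      (∀ c : K, η (algebraMap K (Weyl K) c) = single 0 (algebraMap K (RatFunc K) c))) := by
  have hX : ∀ a : RatFunc K, sg μ 0 a ∈ constCent (K := K) μ := by
    intro a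
    rw [mem_constCent]
    intro c
    change sg μ 0 _ * _ = _ * sg μ 0 _
    rw [sg_mul_sg, sg_mul_sg, mul_comm]
  have hT : ∀ n : ℤ, t μ n ∈ constCent (K := K) μ := by
    intro n
    rw [mem_constCent]
    intro c
    exact (comm_const d r s hν μ hμ c n).eq
  have hP : sg μ r RatFunc.X ∈ constCent (K := K) μ := by
    rw [sg_eq]; exact mul_mem (hX _) (hT _)
  have hb := part_b d hd r s hs hν μ hμ
  refine ⟨part_a d hd r s hν μ hμ, hb, ?_⟩
  obtain ⟨η, hηp, hηq⟩ := exists_eta (K := K) μ ⟨_, hP⟩ ⟨_, hT s⟩ (by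
    apply Subtype.ext
    change t μ s * sg μ r RatFunc.X = sg μ r RatFunc.X * t μ s + 1
    rw [← hb]; abel)
  refine ⟨fun z => ((η z : constCent μ) : DPRing μ), ?_, ?_, ?_, ?_, ?_, ?_⟩
  · have hinj : Function.Injective η := by
      rw [injective_iff_map_eq_zero]
      intro z hz
      obtain ⟨c, hc⟩ := (Finsupp.mem_span_range_iff_exists_finsupp).mp (weyl_span K z)
      by_contra hz0
      have hc0 : c ≠ 0 := by
        rintro rfl
        apply hz0
        rw [← hc]; simp
      obtain ⟨x0, hx0, hmax⟩ := Finset.exists_max_image c.support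
        (fun x : ℕ × ℕ => r * (x.1 : ℤ) + s * (x.2 : ℤ)) (Finsupp.support_nonempty_iff.mpr hc0)
      set m : ℤ := r * (x0.1 : ℤ) + s * (x0.2 : ℤ) with hm
      let coH : constCent (K := K) μ →+ RatFunc K :=
        { toFun := fun f => co μ (f : DPRing μ) m
          map_zero' := rfl
          map_add' := fun _ _ => rfl }
      have hcoeff : ∀ x : ℕ × ℕ, x ∈ c.support → coH (η (c x • wmono K x)) =
          algebraMap (Polynomial K) (RatFunc K)
            (if m = r * (x.1 : ℤ) + s * (x.2 : ℤ) then Polynomial.monomial x.1 (c x) else 0) := by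
        intro x hx
        rw [map_smul, Algebra.smul_def, wmono, map_mul η, map_pow η, map_pow η, hηp, hηq]
        change co μ (sg μ 0 (algebraMap K (RatFunc K) (c x)) *
          (sg μ r RatFunc.X ^ x.1 * t μ s ^ x.2)) m = _
        rw [co_sg_mul, co_mono d hd r s hν μ hμ x.1 x.2 m (hmax x hx)]
        split
        · rw [← Polynomial.C_mul_X_pow_eq_monomial, map_mul, map_pow, RatFunc.algebraMap_X,
            RatFunc.algebraMap_C]
          rfl
        · simp
      have h0 : coH (η z) = 0 := by rw [hz]; rfl
      rw [← hc, Finsupp.sum, map_sum, map_sum, Finset.sum_congr rfl hcoeff, ← map_sum] at h0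
      have h1 := (map_eq_zero_iff _ (RatFunc.algebraMap_injective K)).mp h0
      have h2 := congrArg (fun p => Polynomial.coeff p x0.1) h1
      simp only [Polynomial.finsetSum_coeff, Polynomial.coeff_zero] at h2
      rw [Finset.sum_eq_single_of_mem x0 hx0] at h2
      · rw [if_pos hm, Polynomial.coeff_monomial, if_pos rfl] at h2
        exact (Finsupp.mem_support_iff.mp hx0) h2
      · intro x _ hxne
        split
        · rename_i hxm
          rw [Polynomial.coeff_monomial, if_neg]
          intro h1
          apply hxne
          rw [hm, h1] at hxm
          have h3 : s * (x0.2 : ℤ) = s * (x.2 : ℤ) := by linarith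
          have h4 := mul_left_cancel₀ hs h3
          exact Prod.ext h1 (by exact_mod_cast h4.symm)
        · simp
    intro a b hab
    exact hinj (Subtype.ext hab)
  · exact congrArg Subtype.val hηq
  · exact congrArg Subtype.val hηp
  · intro z w; exact congrArg Subtype.val (map_add η z w)
  · intro z w; exact congrArg Subtype.val (map_mul η z w)
  · intro c; exact congrArg Subtype.val (η.commutes c)

end
end
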